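/- Every integral lattice L in ℝ^16 with BW16 ⊆ L is isometric (via a linear isometry of ℝ^16) to one of the following ten lattices: BW16, O16, Λ_{16,2,1}, Λ_{16,2,2}, Λ_{16,2,3}, Λ'_{16,2,1}, Λ'_{16,2,2}, Λ'_{16,2,3}, D16^+, and E8 ⊥ E8. -/

import Mathlib

noncomputable section

open scoped RealInnerProductSpace

/-- `ℝ^n` with the standard inner product. -/
abbrev E (n : ℕ) := EuclideanSpace ℝ (Fin n)

/-- The standard basis vector `ε i`. -/
def εv {n : ℕ} (i : Fin n) : E n := EuclideanSpace.single i 1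

/-- The vector of `ℝ^n` with the given coordinates. -/
def vec {n : ℕ} (x : Fin n → ℝ) : E n := (WithLp.equiv 2 (Fin n → ℝ)).symm x

/-- The vector of `ℝ^n` with the given integer coordinates. -/
def intVec {n : ℕ} (x : Fin n → ℤ) : E n := (WithLp.equiv 2 (Fin n → ℝ)).symm fun i => (x i : ℝ)

/-- A lattice is integral if all pairwise inner products of its elements are integers. -/
def LatticeIsIntegral {n : ℕ} (L : Submodule ℤ (E n)) : Prop :=
  ∀ x ∈ L, ∀ y ∈ L, ∃ k : ℤ, ⟪x, y⟫ = (k : ℝ)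

/-- Two lattices are isometric if a linear isometry of the ambient space carries
one onto the other. -/
def IsometricLattices {n : ℕ} (L M : Submodule ℤ (E n)) : Prop :=
  ∃ g : E n ≃ₗᵢ[ℝ] E n, g '' (L : Set (E n)) = (M : Set (E n))

def f0 : E 16 :=
  vec ![-1/2, 1/2, 1/2, 1/2, 1/2, 1/2, 1/2, 1/2, -1/2, 1/2, 1/2, 1/2, 1/2, 1/2, 1/2, 1/2]

def g1 : E 16 := εv 0 + εv 4 + εv 8 + εv 12
def g2 : E 16 := εv 0 + εv 2 + εv 4 + εv 6
def g3 : E 16 := εv 0 + εv 2 + εv 8 + εv 10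
def g4 : E 16 := εv 0 + εv 2 + εv 12 + εv 14
def g5 : E 16 := εv 0 + εv 1 + εv 2 + εv 3
def g6 : E 16 := εv 0 + εv 1 + εv 4 + εv 5
def g7 : E 16 := εv 0 + εv 1 + εv 6 + εv 7
def g8 : E 16 := εv 0 + εv 1 + εv 8 + εv 9
def g9 : E 16 := εv 0 + εv 1 + εv 10 + εv 11
def g10 : E 16 := εv 0 + εv 1 + εv 12 + εv 13
def g11 : E 16 := εv 0 + εv 1 + εv 14 + εv 15

/-- The Barnes-Wall lattice `BW₁₆ = ⟨2ε1, …, 2ε16, f0, g1, …, g11⟩`. -/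
def BW16 : Submodule ℤ (E 16) :=
  Submodule.span ℤ ((Set.range fun i : Fin 16 => (2 : ℝ) • εv i) ∪
    {f0, g1, g2, g3, g4, g5, g6, g7, g8, g9, g10, g11})

def f1 : E 16 := vec ![1/2, 1/2, 1/2, 1/2, 1/2, 1/2, 1/2, 1/2, 1, 0, 0, 0, 0, 0, 0, 0]

/-- `O₁₆ = ⟨BW₁₆, f1⟩`. -/
def O16 : Submodule ℤ (E 16) := BW16 ⊔ Submodule.span ℤ {f1}

/-- The root system `(A₁)¹⁶ = {±(ε_{2i-1} ± ε_{2i})}`. -/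
def setA1 : Set (E 16) :=
  {v | ∃ i : Fin 8, v = εv ⟨2 * i.1, by have := i.2; omega⟩ + εv ⟨2 * i.1 + 1, by have := i.2; omega⟩ ∨
       v = εv ⟨2 * i.1, by have := i.2; omega⟩ - εv ⟨2 * i.1 + 1, by have := i.2; omega⟩}

/-- The root system `(D₄)⁴ = {ε_i ± ε_j : i < j in the same block of 4}`. -/
def setD4 : Set (E 16) :=
  {v | ∃ i j : Fin 16, i.1 < j.1 ∧ i.1 / 4 = j.1 / 4 ∧ (v = εv i + εv j ∨ v = εv i - εv j)}

/-- The root system `D₈ ⊥ D₈ = {ε_i ± ε_j : i < j in the same block of 8}`. -/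
def setD8 : Set (E 16) :=
  {v | ∃ i j : Fin 16, i.1 < j.1 ∧ i.1 / 8 = j.1 / 8 ∧ (v = εv i + εv j ∨ v = εv i - εv j)}

def Λ16_2_1 : Submodule ℤ (E 16) := Submodule.span ℤ (setA1 ∪ {f0, f1, g1, g2, g3, g4})
def Λ16_2_2 : Submodule ℤ (E 16) := Submodule.span ℤ (setD4 ∪ {f0, f1, g1})
def Λ16_2_3 : Submodule ℤ (E 16) := Submodule.span ℤ (setD8 ∪ {f0, f1})
def Λ'16_2_1 : Submodule ℤ (E 16) := Submodule.span ℤ (setA1 ∪ {f0, g1, g2, g3, g4})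
def Λ'16_2_2 : Submodule ℤ (E 16) := Submodule.span ℤ (setD4 ∪ {f0, g1})
def Λ'16_2_3 : Submodule ℤ (E 16) := Submodule.span ℤ (setD8 ∪ {f0})

/-- `(ε1 + ⋯ + ε8)/2`. -/
def h1 : E 16 := vec fun i => if i.1 < 8 then 1/2 else 0
/-- `(ε9 + ⋯ + ε16)/2`. -/
def h2 : E 16 := vec fun i => if 8 ≤ i.1 then 1/2 else 0

/-- `D₁₆⁺ = ⟨D₈ ⊥ D₈, ε1 + ε9, f0⟩`. -/
def D16plus : Submodule ℤ (E 16) := Submodule.span ℤ (setD8 ∪ {εv 0 + εv 8, f0})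

/-- `E₈ ⊥ E₈ = ⟨D₈ ⊥ D₈, (ε1+⋯+ε8)/2, (ε9+⋯+ε16)/2⟩`. -/
def E8E8 : Submodule ℤ (E 16) := Submodule.span ℤ (setD8 ∪ {h1, h2})

/-!
With the form `2 ⟪x, y⟫ mod 2`, the quotient `BW₁₆* / BW₁₆` is an orthogonal sum of four hyperbolic
planes `⟨e_k, f_k⟩` over `𝔽₂`, and the quadratic form is `⟪x, x⟫ mod 2`. The integral lattices
containing `BW₁₆` inside `BW₁₆*` are the preimages of the subspaces that are totally isotropic for
the bilinear form. For four orthogonal vectors of norm `4` in `BW₁₆` with half sum in `BW₁₆`, the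
half-turn in their span preserves `BW₁₆` and acts on the quotient as a Siegel transformation. These
transformations bring every totally isotropic subspace to one of `⟨e_0, …, e_{k-1}⟩`,
`⟨e_0, …, e_{k-1}, e_3 + f_3⟩` or `⟨e_0, e_1, e_2, f_3⟩`, whose preimages are the ten lattices.
-/

section SiegelTransformation

variable {R M : Type*} [CommRing R] [AddCommGroup M] [Module R M]

/-- The Siegel (or Eichler) transformation `x ↦ x + B(x, w) u - B(x, u) w` attached to two
orthogonal singular vectors `u`, `w` of a quadratic form with polar form `B`. -/
def siegelTransformation (Q : QuadraticForm R M) {u w : M} (hu : Q u = 0) (hw : Q w = 0)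
    (huw : QuadraticMap.polar Q u w = 0) : M ≃ₗ[R] M where
  toFun x := x + QuadraticMap.polar Q x w • u - QuadraticMap.polar Q x u • w
  invFun x := x - QuadraticMap.polar Q x w • u + QuadraticMap.polar Q x u • w
  map_add' x y := by simp only [QuadraticMap.polar_add_left, add_smul]; abel
  map_smul' c x := by
    simp only [QuadraticMap.polar_smul_left, smul_add, smul_sub, smul_assoc, RingHom.id_apply]
  left_inv x := by
    simp only [QuadraticMap.polar_add_left, QuadraticMap.polar_sub_left,
      QuadraticMap.polar_smul_left, QuadraticMap.polar_self, QuadraticMap.polar_comm Q w u, huw,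
      hu, hw, smul_eq_mul, mul_zero, nsmul_zero, add_zero, sub_zero]
    abel
  right_inv x := by
    simp only [QuadraticMap.polar_add_left, QuadraticMap.polar_sub_left,
      QuadraticMap.polar_smul_left, QuadraticMap.polar_self, QuadraticMap.polar_comm Q w u, huw,
      hu, hw, smul_eq_mul, mul_zero, nsmul_zero, add_zero, sub_zero]
    abel

theorem siegelTransformation_apply (Q : QuadraticForm R M) {u w : M} (hu : Q u = 0) (hw : Q w = 0)
    (huw : QuadraticMap.polar Q u w = 0) (x : M) : siegelTransformation Q hu hw huw x =
      x + QuadraticMap.polar Q x w • u - QuadraticMap.polar Q x u • w := rfl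

theorem map_siegelTransformation (Q : QuadraticForm R M) {u w : M} (hu : Q u = 0) (hw : Q w = 0)
    (huw : QuadraticMap.polar Q u w = 0) (x : M) :
    Q (siegelTransformation Q hu hw huw x) = Q x := by
  rw [siegelTransformation_apply, sub_eq_add_neg, ← neg_smul]
  simp only [QuadraticMap.map_add Q, QuadraticMap.map_smul, QuadraticMap.polar_add_left,
    QuadraticMap.polar_smul_left, QuadraticMap.polar_smul_right, hu, hw, huw, smul_eq_mul]
  ring

end SiegelTransformation

/-- The orthogonal sum of `n` hyperbolic planes over `𝔽₂`; the `i`-th plane has the hyperbolic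
basis `e_i`, `f_i` given by the indices `(i, false)` and `(i, true)`. -/
abbrev HypSpace (n : ℕ) := Fin n × Bool → ZMod 2

namespace HypSpace

variable {n : ℕ}

/-- The quadratic form `∑ x(e_i) x(f_i)` of plus type. -/
def form (n : ℕ) : QuadraticForm (ZMod 2) (HypSpace n) :=
  ∑ i, QuadraticMap.linMulLin (LinearMap.proj (i, false)) (LinearMap.proj (i, true))

theorem form_apply (x : HypSpace n) : form n x = ∑ i, x (i, false) * x (i, true) := by
  simp [form]

theorem polar_form (x y : HypSpace n) :
    QuadraticMap.polar (form n) x y =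
      ∑ i, (x (i, false) * y (i, true) + x (i, true) * y (i, false)) := by
  simp only [QuadraticMap.polar, form_apply, ← Finset.sum_sub_distrib, Pi.add_apply]
  exact Finset.sum_congr rfl fun i _ => by ring

/-- The vector `e_i` (for `s = false`) or `f_i` (for `s = true`) of the hyperbolic basis. -/
abbrev basisVec (a : Fin n × Bool) : HypSpace n := Pi.single a 1

theorem polar_basisVec (x : HypSpace n) (i : Fin n) (s : Bool) :
    QuadraticMap.polar (form n) x (basisVec (i, s)) = x (i, !s) := by
  rw [polar_form, Finset.sum_eq_single i (fun j _ hj => by simp [hj]) (by simp)]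
  cases s <;> simp

theorem form_basisVec (a : Fin n × Bool) : form n (basisVec a) = 0 := by
  obtain ⟨i, s⟩ := a
  rw [form_apply]
  refine Finset.sum_eq_zero fun j _ => ?_
  cases s <;> simp

theorem polar_basisVec_basisVec {a b : Fin n × Bool} (h : a.1 ≠ b.1) :
    QuadraticMap.polar (form n) (basisVec a) (basisVec b) = 0 := by
  obtain ⟨i, s⟩ := a
  obtain ⟨j, t⟩ := b
  have hne : (j, !t) ≠ (i, s) := fun hij => h (congrArg Prod.fst hij).symm
  rw [polar_basisVec, basisVec, Pi.single_eq_of_ne hne]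

/-- The Siegel transformation of two hyperbolic basis vectors from different planes. -/
def siegel {a b : Fin n × Bool} (h : a.1 ≠ b.1) : HypSpace n ≃ₗ[ZMod 2] HypSpace n :=
  siegelTransformation (form n) (form_basisVec a) (form_basisVec b) (polar_basisVec_basisVec h)

theorem siegel_apply {i j : Fin n} {s t : Bool} (h : i ≠ j) (x : HypSpace n) :
    siegel (a := (i, s)) (b := (j, t)) h x =
      x + Pi.single (i, s) (x (j, !t)) + Pi.single (j, t) (x (i, !s)) := by
  rw [siegel, siegelTransformation_apply, polar_basisVec, polar_basisVec, ZModModule.sub_eq_add,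
    ← Pi.single_smul, ← Pi.single_smul, smul_eq_mul, smul_eq_mul, mul_one, mul_one]

/-- The group generated by the Siegel transformations of basis vectors in planes from `S`. -/
def siegelGroup (S : Set (Fin n)) : Subgroup (HypSpace n ≃ₗ[ZMod 2] HypSpace n) :=
  Subgroup.closure {g | ∃ (a b : Fin n × Bool) (h : a.1 ≠ b.1), a.1 ∈ S ∧ b.1 ∈ S ∧ g = siegel h}

theorem siegelGroup_mono {S T : Set (Fin n)} (h : S ⊆ T) : siegelGroup S ≤ siegelGroup T :=
  Subgroup.closure_mono fun _ ⟨a, b, hab, ha, hb, hg⟩ => ⟨a, b, hab, h ha, h hb, hg⟩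

theorem siegel_mem_siegelGroup {S : Set (Fin n)} {a b : Fin n × Bool} (h : a.1 ≠ b.1)
    (ha : a.1 ∈ S) (hb : b.1 ∈ S) : siegel h ∈ siegelGroup S :=
  Subgroup.subset_closure ⟨a, b, h, ha, hb, rfl⟩

theorem form_siegelGroup {S : Set (Fin n)} {g : HypSpace n ≃ₗ[ZMod 2] HypSpace n}
    (hg : g ∈ siegelGroup S) (x : HypSpace n) : form n (g x) = form n x := by
  induction hg using Subgroup.closure_induction generalizing x with
  | mem g hg =>
    obtain ⟨a, b, h, -, -, rfl⟩ := hg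
    exact map_siegelTransformation ..
  | one => rfl
  | mul g h _ _ ihg ihh => rw [LinearEquiv.mul_apply, ihg, ihh]
  | inv g _ ih => simpa using (ih (g⁻¹ x)).symm

theorem polar_siegelGroup {S : Set (Fin n)} {g : HypSpace n ≃ₗ[ZMod 2] HypSpace n}
    (hg : g ∈ siegelGroup S) (x y : HypSpace n) :
    QuadraticMap.polar (form n) (g x) (g y) = QuadraticMap.polar (form n) x y := by
  simp only [QuadraticMap.polar, ← map_add, form_siegelGroup hg]

theorem siegelGroup_apply_of_notMem {S : Set (Fin n)} {g : HypSpace n ≃ₗ[ZMod 2] HypSpace n}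
    (hg : g ∈ siegelGroup S) (x : HypSpace n) {c : Fin n × Bool} (hc : c.1 ∉ S) :
    g x c = x c := by
  induction hg using Subgroup.closure_induction generalizing x with
  | mem g hg =>
    obtain ⟨⟨i, s⟩, ⟨j, t⟩, h, hi, hj, rfl⟩ := hg
    have hci : c ≠ (i, s) := by rintro rfl; exact hc hi
    have hcj : c ≠ (j, t) := by rintro rfl; exact hc hj
    simp [siegel_apply, Pi.single_eq_of_ne hci, Pi.single_eq_of_ne hcj]
  | one => rfl
  | mul g h _ _ ihg ihh => rw [LinearEquiv.mul_apply, ihg, ihh]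
  | inv g _ ih => simpa using (ih (g⁻¹ x)).symm

theorem siegelGroup_apply_eq_self {S : Set (Fin n)} {g : HypSpace n ≃ₗ[ZMod 2] HypSpace n}
    (hg : g ∈ siegelGroup S) {x : HypSpace n} (hx : ∀ c : Fin n × Bool, c.1 ∈ S → x c = 0) :
    g x = x := by
  induction hg using Subgroup.closure_induction with
  | mem g hg =>
    obtain ⟨⟨i, s⟩, ⟨j, t⟩, h, hi, hj, rfl⟩ := hg
    simp [siegel_apply, hx (i, !s) hi, hx (j, !t) hj]
  | one => rfl
  | mul g h _ _ ihg ihh => rw [LinearEquiv.mul_apply, ihh, ihg]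
  | inv g _ ih => exact (LinearEquiv.symm_apply_eq g).2 ih.symm

theorem eq_one_of_ne_zero {r : ZMod 2} (h : r ≠ 0) : r = 1 := Fin.eq_one_of_ne_zero r h

theorem exists_clear_of_pivot {S : Set (Fin n)} {x : HypSpace n}
    (hx : ∀ c : Fin n × Bool, c.1 ∉ S → x c = 0) {i : Fin n} {s : Bool} (hi : i ∈ S)
    (hpivot : x (i, s) = 1) (T : Finset (Fin n × Bool)) :
    ∃ g ∈ siegelGroup S, g x (i, s) = 1 ∧ ∀ c ∈ T, c.1 ≠ i → g x c = 0 := by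
  induction T using Finset.induction_on with
  | empty => exact ⟨1, one_mem _, hpivot, by simp⟩
  | insert b T _ ih =>
    obtain ⟨g, hg, hgi, hgT⟩ := ih
    obtain ⟨j, t⟩ := b
    by_cases hb : j = i ∨ g x (j, t) = 0
    · refine ⟨g, hg, hgi, fun c hc hci => ?_⟩
      obtain rfl | hc := Finset.mem_insert.1 hc
      exacts [hb.resolve_left hci, hgT c hc hci]
    push Not at hb
    obtain ⟨hji, hb⟩ := hb
    have hj : j ∈ S := by
      by_contra hj
      exact hb ((siegelGroup_apply_of_notMem hg x hj).trans (hx _ hj))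
    refine ⟨siegel (a := (i, !s)) (b := (j, t)) hji.symm * g,
      mul_mem (siegel_mem_siegelGroup _ hi hj) hg, ?_, fun c hc hci => ?_⟩
    · simp [siegel_apply, hgi, hji.symm]
    have hc' : c ≠ (i, !s) := by rintro rfl; exact hci rfl
    rw [LinearEquiv.mul_apply, siegel_apply, Bool.not_not, hgi, Pi.add_apply, Pi.add_apply,
      Pi.single_eq_of_ne hc', add_zero]
    obtain rfl | hcb := eq_or_ne c (j, t)
    · rw [Pi.single_eq_same, eq_one_of_ne_zero hb, CharTwo.add_self_eq_zero]
    · rw [Pi.single_eq_of_ne hcb, add_zero]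
      exact hgT c ((Finset.mem_insert.1 hc).resolve_left hcb) hci

theorem exists_pivot_of_coord {S : Set (Fin n)} {x : HypSpace n} {i j : Fin n} {t : Bool}
    (hi : i ∈ S) (hj : j ∈ S) (hij : i ≠ j) (h : x (j, t) = 1) :
    ∃ g ∈ siegelGroup S, g x (i, false) = 1 := by
  obtain hxi | hxi := eq_or_ne (x (i, false)) 0
  · refine ⟨siegel (a := (i, false)) (b := (j, !t)) hij, siegel_mem_siegelGroup _ hi hj, ?_⟩
    simp [siegel_apply, hij, h, hxi]
  · exact ⟨1, one_mem _, eq_one_of_ne_zero hxi⟩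

theorem exists_pivot {S : Set (Fin n)} {x : HypSpace n} (hx0 : x ≠ 0)
    (hx : ∀ c : Fin n × Bool, c.1 ∉ S → x c = 0) {i : Fin n} (hi : i ∈ S)
    (h : x = basisVec (i, true) → ∃ j ∈ S, j ≠ i) :
    ∃ g ∈ siegelGroup S, g x (i, false) = 1 := by
  by_cases hcoord : ∃ (j : Fin n) (t : Bool), j ≠ i ∧ x (j, t) ≠ 0
  · obtain ⟨j, t, hji, hjt⟩ := hcoord
    exact exists_pivot_of_coord hi (not_imp_comm.1 (hx (j, t)) hjt) hji.symm
      (eq_one_of_ne_zero hjt)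
  push Not at hcoord
  obtain hfalse | hfalse := eq_or_ne (x (i, false)) 0
  · have htrue : x (i, true) ≠ 0 := by
      refine fun htrue => hx0 (funext fun ⟨j, t⟩ => ?_)
      obtain rfl | hji := eq_or_ne j i
      · cases t <;> assumption
      · exact hcoord j t hji
    have hxi : x = basisVec (i, true) := by
      funext ⟨j, t⟩
      obtain rfl | hji := eq_or_ne j i
      · cases t
        · simpa using hfalse
        · simpa using eq_one_of_ne_zero htrue
      · simpa [hji] using hcoord j t hji
    obtain ⟨j, hj, hji⟩ := h hxi
    have hg := siegel_mem_siegelGroup (a := (i, false)) (b := (j, false)) hji.symm hi hj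
    obtain ⟨g', hg', hg'x⟩ := exists_pivot_of_coord (t := false) hi hj hji.symm
      (x := siegel (a := (i, false)) (b := (j, false)) hji.symm x)
      (by simp [siegel_apply, hji, hxi])
    exact ⟨g' * siegel hji.symm, mul_mem hg' hg, hg'x⟩
  · exact ⟨1, one_mem _, eq_one_of_ne_zero hfalse⟩

theorem exists_siegelGroup_apply_eq {S : Set (Fin n)} {x : HypSpace n} (hx0 : x ≠ 0)
    (hx : ∀ c : Fin n × Bool, c.1 ∉ S → x c = 0) {i : Fin n} (hi : i ∈ S)
    (h : x = basisVec (i, true) → ∃ j ∈ S, j ≠ i) :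
    ∃ g ∈ siegelGroup S, g x = basisVec (i, false) + form n x • basisVec (i, true) := by
  obtain ⟨g, hg, hgi⟩ := exists_pivot hx0 hx hi h
  obtain ⟨g', hg', hgi', hclear⟩ := exists_clear_of_pivot (x := g x)
    (fun c hc => (siegelGroup_apply_of_notMem hg x hc).trans (hx c hc)) hi hgi Finset.univ
  refine ⟨g' * g, mul_mem hg' hg, ?_⟩
  have hform : form n x = g' (g x) (i, true) := by
    rw [← form_siegelGroup hg, ← form_siegelGroup hg', form_apply,
      Finset.sum_eq_single i (fun j _ hj => by rw [hclear _ (Finset.mem_univ _) hj, zero_mul])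
        (by simp), hgi', one_mul]
  rw [hform]
  funext ⟨j, t⟩
  obtain rfl | hji := eq_or_ne j i
  · cases t <;> simp [hgi']
  · simpa [hji] using hclear (j, t) (Finset.mem_univ _) hji

/-- The totally singular subspace `⟨e_0, …, e_{k-1}⟩`. -/
def flag (n k : ℕ) : Submodule (ZMod 2) (HypSpace n) where
  carrier := {x | ∀ i : Fin n, x (i, true) = 0 ∧ (k ≤ i → x (i, false) = 0)}
  zero_mem' := by simp
  add_mem' hx hy i := ⟨by simp [hx i, hy i], fun hi => by simp [(hx i).2 hi, (hy i).2 hi]⟩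
  smul_mem' r x hx i := ⟨by simp [hx i], fun hi => by simp [(hx i).2 hi]⟩

theorem mem_flag {k : ℕ} {x : HypSpace n} :
    x ∈ flag n k ↔ ∀ i : Fin n, x (i, true) = 0 ∧ (k ≤ i → x (i, false) = 0) := Iff.rfl

theorem basisVec_mem_flag {k : ℕ} {i : Fin n} : basisVec (i, false) ∈ flag n k ↔ (i : ℕ) < k := by
  refine ⟨fun h => ?_, fun hi j => ⟨by simp, fun hj => ?_⟩⟩
  · by_contra! hi
    simpa using (h i).2 hi
  · have hji : j ≠ i := by rintro rfl; omega
    simp [hji]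

theorem flag_zero : flag n 0 = ⊥ := by
  refine (Submodule.eq_bot_iff _).2 fun x hx => funext fun ⟨i, s⟩ => ?_
  cases s
  exacts [(hx i).2 (Nat.zero_le _), (hx i).1]

theorem flag_succ (k : Fin n) :
    flag n (k + 1) = flag n k ⊔ Submodule.span (ZMod 2) {basisVec (k, false)} := by
  refine le_antisymm (fun x hx => ?_) (sup_le (fun x hx i => ?_) ?_)
  · refine Submodule.mem_sup.2 ⟨x - x (k, false) • basisVec (k, false), fun i => ⟨?_, fun hi => ?_⟩,
      _, Submodule.smul_mem _ (x (k, false)) (Submodule.mem_span_singleton_self _),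
      sub_add_cancel _ _⟩
    · simp [(hx i).1]
    · obtain rfl | hik := eq_or_ne i k
      · simp
      · simpa [hik] using (hx i).2 (by omega)
  · exact ⟨(hx i).1, fun hi => (hx i).2 (by omega)⟩
  · rw [Submodule.span_singleton_le_iff_mem, basisVec_mem_flag]
    exact Nat.lt_succ_self _

/-- The vectors supported on the planes from the `k`-th on. -/
def tailSpace (n k : ℕ) : Submodule (ZMod 2) (HypSpace n) where
  carrier := {x | ∀ c : Fin n × Bool, (c.1 : ℕ) < k → x c = 0}
  zero_mem' := by simp
  add_mem' hx hy c hc := by simp [hx c hc, hy c hc]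
  smul_mem' r x hx c hc := by simp [hx c hc]

/-- A subspace on which the polar form vanishes identically (the quadratic form need not). -/
def IsTotallyIsotropic (C : Submodule (ZMod 2) (HypSpace n)) : Prop :=
  ∀ x ∈ C, ∀ y ∈ C, QuadraticMap.polar (form n) x y = 0

theorem IsTotallyIsotropic.map {C : Submodule (ZMod 2) (HypSpace n)} (hC : IsTotallyIsotropic C)
    {S : Set (Fin n)} {g : HypSpace n ≃ₗ[ZMod 2] HypSpace n} (hg : g ∈ siegelGroup S) :
    IsTotallyIsotropic (C.map g.toLinearMap) := by
  rintro _ ⟨x, hx, rfl⟩ _ ⟨y, hy, rfl⟩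
  exact (polar_siegelGroup hg x y).trans (hC x hx y hy)

theorem IsTotallyIsotropic.eq_flag_sup_tail {C : Submodule (ZMod 2) (HypSpace n)}
    (hC : IsTotallyIsotropic C) {k : ℕ} (hk : flag n k ≤ C) :
    C = flag n k ⊔ (C ⊓ tailSpace n k) := by
  refine le_antisymm (fun x hx => ?_) (sup_le hk inf_le_left)
  let head : HypSpace n := fun c => if (c.1 : ℕ) < k then x c else 0
  have hhead : head ∈ flag n k := fun i => ⟨?_, fun hi => if_neg hi.not_gt⟩
  · refine Submodule.mem_sup.2 ⟨head, hhead, x - head, ⟨sub_mem hx (hk hhead), fun c hc => ?_⟩,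
      add_sub_cancel _ _⟩
    simp [head, hc]
  · by_cases hi : (i : ℕ) < k
    · simpa [head, hi, polar_basisVec] using hC x hx _ (hk (basisVec_mem_flag.2 hi))
    · exact if_neg hi

theorem siegelGroup_apply_of_mem_flag {k : Fin n} {g : HypSpace n ≃ₗ[ZMod 2] HypSpace n}
    (hg : g ∈ siegelGroup (Set.Ici k)) {x : HypSpace n} (hx : x ∈ flag n k) : g x = x :=
  siegelGroup_apply_eq_self hg fun ⟨i, s⟩ hi => by
    cases s
    exacts [(hx i).2 hi, (hx i).1]

theorem map_flag {k : Fin n} {g : HypSpace n ≃ₗ[ZMod 2] HypSpace n}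
    (hg : g ∈ siegelGroup (Set.Ici k)) : (flag n k).map g.toLinearMap = flag n k := by
  ext x
  refine ⟨?_, fun hx => ⟨x, hx, siegelGroup_apply_of_mem_flag hg hx⟩⟩
  rintro ⟨y, hy, rfl⟩
  rwa [LinearEquiv.coe_coe, siegelGroup_apply_of_mem_flag hg hy]

theorem exists_flag_succ_le_map {C : Submodule (ZMod 2) (HypSpace n)} {k : Fin n}
    (hk : flag n k ≤ C) {x : HypSpace n} (hx : x ∈ C ⊓ tailSpace n k) (hx0 : x ≠ 0)
    (hsing : form n x = 0) (h : x = basisVec (k, true) → ∃ j ∈ Set.Ici k, j ≠ k) :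
    ∃ g ∈ siegelGroup (Set.Ici k), flag n (k + 1) ≤ C.map g.toLinearMap := by
  obtain ⟨g, hg, hgx⟩ := exists_siegelGroup_apply_eq hx0
    (fun c hc => hx.2 c (not_le.1 hc)) Set.self_mem_Ici h
  refine ⟨g, hg, ?_⟩
  rw [flag_succ, sup_le_iff, Submodule.span_singleton_le_iff_mem]
  refine ⟨(map_flag hg).ge.trans (Submodule.map_mono hk), x, hx.1, ?_⟩
  rw [LinearEquiv.coe_coe, hgx, hsing, zero_smul, add_zero]

theorem IsTotallyIsotropic.eq_span_of_forall_form_ne_zero {T : Submodule (ZMod 2) (HypSpace n)}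
    (hT : IsTotallyIsotropic T) (hform : ∀ x ∈ T, x ≠ 0 → form n x ≠ 0) {x : HypSpace n}
    (hx : x ∈ T) (hx0 : x ≠ 0) : T = Submodule.span (ZMod 2) {x} := by
  refine le_antisymm (fun y hy => ?_) ((Submodule.span_singleton_le_iff_mem _ _).2 hx)
  obtain rfl | hy0 := eq_or_ne y 0
  · exact zero_mem _
  have hxy : form n (x + y) = 0 := by
    rw [QuadraticMap.map_add (form n), hT x hx y hy, eq_one_of_ne_zero (hform x hx hx0),
      eq_one_of_ne_zero (hform y hy hy0)]
    rfl
  have hsum : x + y = 0 := not_imp_comm.1 (hform _ (add_mem hx hy)) (not_not.2 hxy)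
  rw [← ZModModule.sub_eq_add, sub_eq_zero] at hsum
  exact hsum ▸ Submodule.mem_span_singleton_self x

/-- The normal forms of totally isotropic subspaces for the action of the Siegel group. -/
def IsNormalForm (C : Submodule (ZMod 2) (HypSpace (n + 1))) : Prop :=
  (∃ k ≤ n + 1, C = flag (n + 1) k) ∨
  (∃ k ≤ n, C = flag (n + 1) k ⊔
    Submodule.span (ZMod 2) {basisVec (Fin.last n, false) + basisVec (Fin.last n, true)}) ∨
  C = flag (n + 1) n ⊔ Submodule.span (ZMod 2) {basisVec (Fin.last n, true)}

theorem IsTotallyIsotropic.eq_of_basisVec_last_mem {C : Submodule (ZMod 2) (HypSpace (n + 1))}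
    (hC : IsTotallyIsotropic C) (hn : flag (n + 1) n ≤ C) (hmem : basisVec (Fin.last n, true) ∈ C) :
    C = flag (n + 1) n ⊔ Submodule.span (ZMod 2) {basisVec (Fin.last n, true)} := by
  refine le_antisymm ?_ (sup_le hn ((Submodule.span_singleton_le_iff_mem _ _).2 hmem))
  rw [hC.eq_flag_sup_tail hn]
  refine sup_le_sup_left (fun y hy => Submodule.mem_span_singleton.2 ⟨y (Fin.last n, true), ?_⟩) _
  have hlast : y (Fin.last n, false) = 0 := by simpa [polar_basisVec] using hC y hy.1 _ hmem
  funext ⟨i, s⟩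
  induction i using Fin.lastCases with
  | last => cases s <;> simp [hlast]
  | cast i =>
    have hi := hy.2 (i.castSucc, s) i.2
    simp [hi, (Fin.castSucc_lt_last i).ne]

theorem exists_map_eq_flag_sup_nonsingular {C : Submodule (ZMod 2) (HypSpace (n + 1))}
    (hC : IsTotallyIsotropic C) {k : Fin (n + 1)} (hk : flag (n + 1) k ≤ C)
    (hform : ∀ x ∈ C ⊓ tailSpace (n + 1) k, x ≠ 0 → form (n + 1) x ≠ 0)
    {x : HypSpace (n + 1)} (hx : x ∈ C ⊓ tailSpace (n + 1) k) (hx0 : x ≠ 0) :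
    ∃ g ∈ siegelGroup (Set.Ici k), C.map g.toLinearMap = flag (n + 1) k ⊔
      Submodule.span (ZMod 2) {basisVec (Fin.last n, false) + basisVec (Fin.last n, true)} := by
  have hQ : form (n + 1) x = 1 := eq_one_of_ne_zero (hform x hx hx0)
  obtain ⟨g, hg, hgx⟩ := exists_siegelGroup_apply_eq hx0 (fun c hc => hx.2 c (not_le.1 hc))
    (S := Set.Ici k) (i := Fin.last n) (Fin.le_last k)
    (fun h => absurd hQ (by simp [h, form_basisVec]))
  refine ⟨g, hg, ?_⟩
  have htail : IsTotallyIsotropic (C ⊓ tailSpace (n + 1) k) := fun y hy z hz => hC y hy.1 z hz.1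
  rw [hC.eq_flag_sup_tail hk, htail.eq_span_of_forall_form_ne_zero hform hx hx0, Submodule.map_sup,
    map_flag hg, Submodule.map_span, Set.image_singleton, LinearEquiv.coe_coe, hgx, hQ, one_smul]

theorem IsTotallyIsotropic.exists_isNormalForm_of_flag_le {k : ℕ} (hk : k ≤ n + 1)
    {C : Submodule (ZMod 2) (HypSpace (n + 1))} (hC : IsTotallyIsotropic C)
    (hkC : flag (n + 1) k ≤ C) :
    ∃ g ∈ siegelGroup Set.univ, IsNormalForm (C.map g.toLinearMap) := by
  induction hk using Nat.decreasingInduction generalizing C with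
  | self =>
    have htail : tailSpace (n + 1) (n + 1) = ⊥ :=
      (Submodule.eq_bot_iff _).2 fun x hx => funext fun c => hx c c.1.2
    refine ⟨1, one_mem _, Or.inl ⟨n + 1, le_rfl, (Submodule.map_id C).trans ?_⟩⟩
    simpa [htail] using hC.eq_flag_sup_tail hkC
  | of_succ k hk ih =>
    lift k to Fin (n + 1) using hk
    by_cases hsing : ∃ x ∈ C ⊓ tailSpace (n + 1) k, x ≠ 0 ∧ form (n + 1) x = 0
    · obtain ⟨x, hx, hx0, hxQ⟩ := hsing
      by_cases hlast : k = Fin.last n ∧ x = basisVec (k, true)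
      · obtain ⟨rfl, rfl⟩ := hlast
        exact ⟨1, one_mem _, Or.inr (Or.inr
          ((Submodule.map_id C).trans (hC.eq_of_basisVec_last_mem hkC hx.1)))⟩
      obtain ⟨g, hg, hgC⟩ := exists_flag_succ_le_map hkC hx hx0 hxQ fun hxk =>
        ⟨Fin.last n, Fin.le_last k, fun h => hlast ⟨h.symm, hxk⟩⟩
      obtain ⟨g', hg', hnormal⟩ := ih (hC.map hg) hgC
      refine ⟨g' * g, mul_mem hg' (siegelGroup_mono (Set.subset_univ _) hg), ?_⟩
      rwa [← Submodule.map_comp] at hnormal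
    push Not at hsing
    by_cases htail : C ⊓ tailSpace (n + 1) k = ⊥
    · refine ⟨1, one_mem _, Or.inl ⟨k, k.2.le, (Submodule.map_id C).trans ?_⟩⟩
      simpa [htail] using hC.eq_flag_sup_tail hkC
    · obtain ⟨x, hx, hx0⟩ := Submodule.exists_mem_ne_zero_of_ne_bot htail
      obtain ⟨g, hg, hgC⟩ := exists_map_eq_flag_sup_nonsingular hC hkC hsing hx hx0
      exact ⟨g, siegelGroup_mono (Set.subset_univ _) hg, Or.inr (Or.inl ⟨k, k.is_le, hgC⟩)⟩

theorem IsTotallyIsotropic.exists_isNormalForm {C : Submodule (ZMod 2) (HypSpace (n + 1))}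
    (hC : IsTotallyIsotropic C) :
    ∃ g ∈ siegelGroup Set.univ, IsNormalForm (C.map g.toLinearMap) :=
  hC.exists_isNormalForm_of_flag_le (Nat.zero_le _) (flag_zero.trans_le bot_le)

end HypSpace

section Lattices

variable {n : ℕ}

theorem IsometricLattices.trans {L M N : Submodule ℤ (E n)} (hLM : IsometricLattices L M)
    (hMN : IsometricLattices M N) : IsometricLattices L N := by
  obtain ⟨g, hg⟩ := hLM
  obtain ⟨h, hh⟩ := hMN
  refine ⟨g.trans h, ?_⟩
  rw [← hh, ← hg, Set.image_image]
  rfl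

theorem IsometricLattices.refl (L : Submodule ℤ (E n)) : IsometricLattices L L :=
  ⟨LinearIsometryEquiv.refl ℝ _, Set.image_id _⟩

theorem IsometricLattices.symm {L M : Submodule ℤ (E n)} (h : IsometricLattices L M) :
    IsometricLattices M L := by
  obtain ⟨g, hg⟩ := h
  refine ⟨g.symm, ?_⟩
  rw [← hg, Set.image_image]
  simp

/-- The dual lattice: the vectors having integral inner products with all of `Λ`. -/
def dualLattice (Λ : Submodule ℤ (E n)) : Submodule ℤ (E n) :=
  LinearMap.BilinForm.dualSubmodule (innerₗ (E n)) Λ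

theorem mem_dualLattice {Λ : Submodule ℤ (E n)} {x : E n} :
    x ∈ dualLattice Λ ↔ ∀ y ∈ Λ, ∃ k : ℤ, ⟪x, y⟫ = k := by
  simp [dualLattice, LinearMap.BilinForm.mem_dualSubmodule, Submodule.mem_one, eq_comm]

/-- The half-turn in the span of `v 0, …, v 3`: it is `-1` there and fixes the orthogonal
complement. -/
def halfTurn (v : Fin 4 → E n) : E n ≃ₗᵢ[ℝ] E n :=
  (Submodule.span ℝ (Set.range v))ᗮ.reflection

theorem halfTurn_halfTurn (v : Fin 4 → E n) (x : E n) : halfTurn v (halfTurn v x) = x :=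
  Submodule.reflection_reflection _ x

theorem halfTurn_apply {v : Fin 4 → E n} (hv : ∀ i j, ⟪v i, v j⟫ = if i = j then 4 else 0)
    (x : E n) : halfTurn v x = x - (1 / 2 : ℝ) • ∑ i, ⟪x, v i⟫ • v i := by
  have hproj : (Submodule.span ℝ (Set.range v)).starProjection x =
      (1 / 4 : ℝ) • ∑ i, ⟪x, v i⟫ • v i := by
    refine Submodule.eq_starProjection_of_mem_of_inner_eq_zero
      (Submodule.smul_mem _ _ (Submodule.sum_mem _ fun i _ => Submodule.smul_mem _ _
        (Submodule.subset_span ⟨i, rfl⟩))) fun y hy => ?_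
    induction hy using Submodule.span_induction with
    | mem y hy =>
      obtain ⟨j, rfl⟩ := hy
      simp only [inner_sub_left, real_inner_smul_left, sum_inner, hv, mul_ite, mul_zero,
        Finset.sum_ite_eq', Finset.mem_univ, if_true]
      ring
    | zero => simp
    | add y z _ _ hy hz => rw [inner_add_right, hy, hz, add_zero]
    | smul r y _ hy => rw [real_inner_smul_right, hy, mul_zero]
  rw [halfTurn, Submodule.reflection_orthogonal_apply, Submodule.reflection_apply, hproj]
  module

/-- Four pairwise orthogonal vectors of norm `4` in `Λ` whose half sum lies in `Λ`; `u` and `w` are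
the two half sums `(v 0 + v 1) / 2` and `(v 0 + v 2) / 2`. -/
structure IsHalfTurnFrame (Λ : Submodule ℤ (E n)) (u w : E n) (v : Fin 4 → E n) : Prop where
  mem : ∀ i, v i ∈ Λ
  inner_eq : ∀ i j, ⟪v i, v j⟫ = if i = j then 4 else 0
  half_sum_mem : (1 / 2 : ℝ) • ∑ i, v i ∈ Λ
  add_eq_left : v 0 + v 1 = (2 : ℝ) • u
  add_eq_right : v 0 + v 2 = (2 : ℝ) • w

/-- Modulo `Λ`, the half-turn acts on the dual lattice as a Siegel transformation. -/
theorem IsHalfTurnFrame.halfTurn_sub_mem {Λ : Submodule ℤ (E n)} {u w : E n} {v : Fin 4 → E n}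
    (hv : IsHalfTurnFrame Λ u w v) {x : E n} (hx : x ∈ dualLattice Λ) :
    halfTurn v x - (x - (2 * ⟪x, w⟫) • u - (2 * ⟪x, u⟫) • w) ∈ Λ := by
  obtain ⟨s, hs⟩ := mem_dualLattice.1 hx _ hv.half_sum_mem
  choose k hk using fun i => mem_dualLattice.1 hx _ (hv.mem i)
  have hsum : (2 * s : ℝ) = k 0 + k 1 + k 2 + k 3 := by
    rw [← hs, real_inner_smul_right, inner_sum, Fin.sum_univ_four, hk, hk, hk, hk]
    ring
  have hu : 2 * ⟪x, u⟫ = k 0 + k 1 := by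
    rw [← hk, ← hk, ← inner_add_right, hv.add_eq_left, real_inner_smul_right]
  have hw : 2 * ⟪x, w⟫ = k 0 + k 2 := by
    rw [← hk, ← hk, ← inner_add_right, hv.add_eq_right, real_inner_smul_right]
  have hu' : u = (1 / 2 : ℝ) • (v 0 + v 1) := by rw [hv.add_eq_left]; module
  have hw' : w = (1 / 2 : ℝ) • (v 0 + v 2) := by rw [hv.add_eq_right]; module
  have key : halfTurn v x - (x - (2 * ⟪x, w⟫) • u - (2 * ⟪x, u⟫) • w) =
      s • (v 0 + v 1 + v 2) - k 3 • (1 / 2 : ℝ) • ∑ i, v i - k 1 • v 1 - k 2 • v 2 := by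
    have hs' : (s : ℝ) = (k 0 + k 1 + k 2 + k 3) / 2 := by linarith
    rw [halfTurn_apply hv.inner_eq, hu, hw, hu', hw', Fin.sum_univ_four, Fin.sum_univ_four]
    simp only [hk, ← Int.cast_smul_eq_zsmul ℝ, hs']
    module
  rw [key]
  exact sub_mem (sub_mem (sub_mem (Λ.smul_mem _ (add_mem (add_mem (hv.mem 0) (hv.mem 1))
    (hv.mem 2))) (Λ.smul_mem _ hv.half_sum_mem)) (Λ.smul_mem _ (hv.mem 1)))
    (Λ.smul_mem _ (hv.mem 2))

end Lattices

section Glue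

open HypSpace

variable {n m : ℕ} {Λ : Submodule ℤ (E n)} {b : Fin m × Bool → E n}

/-- Coordinatewise reduction modulo `2`. -/
def reduction (m : ℕ) : (Fin m × Bool → ℤ) →ₗ[ℤ] HypSpace m :=
  ((Int.castAddHom (ZMod 2)).compLeft _).toIntLinearMap

theorem reduction_apply (z : Fin m × Bool → ℤ) (a : Fin m × Bool) :
    reduction m z a = (z a : ZMod 2) := rfl

theorem reduction_single (a : Fin m × Bool) :
    reduction m (Pi.single a 1) = basisVec a := by
  funext c
  obtain rfl | hc := eq_or_ne c a
  · simp [reduction_apply]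
  · simp [reduction_apply, hc]

theorem reduction_surjective : Function.Surjective (reduction m) := fun c =>
  ⟨fun a => (c a).cast, funext fun a => by rw [reduction_apply, ZMod.intCast_zmod_cast]⟩

theorem exists_eq_two_smul_of_reduction_eq_zero {z : Fin m × Bool → ℤ} (hz : reduction m z = 0) :
    ∃ y : Fin m × Bool → ℤ, z = (2 : ℤ) • y := by
  choose y hy using fun a => (ZMod.intCast_zmod_eq_zero_iff_dvd (z a) 2).1 (congrFun hz a)
  exact ⟨y, funext hy⟩

/-- The lattice obtained from `Λ` by adjoining the integral combinations of the glue vectors `b`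
whose coefficients reduce modulo `2` to an element of the binary code `C`. -/
def glueLattice (Λ : Submodule ℤ (E n)) (b : Fin m × Bool → E n)
    (C : Submodule (ZMod 2) (HypSpace m)) : Submodule ℤ (E n) :=
  Λ ⊔ ((AddSubgroup.toIntSubmodule C.toAddSubgroup).comap (reduction m)).map
    (Fintype.linearCombination ℤ b)

theorem mem_glueLattice {C : Submodule (ZMod 2) (HypSpace m)} {x : E n} :
    x ∈ glueLattice Λ b C ↔
      ∃ z, reduction m z ∈ C ∧ x - Fintype.linearCombination ℤ b z ∈ Λ := by
  rw [glueLattice, sup_comm, Submodule.mem_sup]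
  constructor
  · rintro ⟨_, ⟨z, hz, rfl⟩, y, hy, rfl⟩
    exact ⟨z, hz, by simpa using hy⟩
  · rintro ⟨z, hz, hx⟩
    exact ⟨_, ⟨z, hz, rfl⟩, _, hx, add_sub_cancel _ _⟩

theorem le_glueLattice (C : Submodule (ZMod 2) (HypSpace m)) : Λ ≤ glueLattice Λ b C := le_sup_left

theorem linearCombination_mem_glueLattice {C : Submodule (ZMod 2) (HypSpace m)}
    {z : Fin m × Bool → ℤ} (hz : reduction m z ∈ C) :
    Fintype.linearCombination ℤ b z ∈ glueLattice Λ b C :=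
  mem_glueLattice.2 ⟨z, hz, by rw [sub_self]; exact Λ.zero_mem⟩

theorem glueLattice_sup_span (C : Submodule (ZMod 2) (HypSpace m)) (y : Fin m × Bool → ℤ) :
    glueLattice Λ b (C ⊔ Submodule.span (ZMod 2) {reduction m y}) =
      glueLattice Λ b C ⊔ Submodule.span ℤ {Fintype.linearCombination ℤ b y} := by
  refine le_antisymm (fun x hx => ?_) (sup_le (fun x hx => ?_) ?_)
  · obtain ⟨z, hz, hxz⟩ := mem_glueLattice.1 hx
    obtain ⟨c, hc, d, hd, hcd⟩ := Submodule.mem_sup.1 hz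
    obtain ⟨r, rfl⟩ := Submodule.mem_span_singleton.1 hd
    obtain ⟨k, rfl⟩ := ZMod.intCast_surjective r
    refine Submodule.mem_sup.2 ⟨x - k • Fintype.linearCombination ℤ b y,
      mem_glueLattice.2 ⟨z - k • y, ?_, ?_⟩, _,
      Submodule.smul_mem _ k (Submodule.mem_span_singleton_self _), sub_add_cancel _ _⟩
    · rw [map_sub, map_smul, ← hcd, ← Int.cast_smul_eq_zsmul (ZMod 2), add_sub_cancel_right]
      exact hc
    · rw [map_sub, map_smul, sub_sub_sub_cancel_right]
      exact hxz
  · obtain ⟨z, hz, hxz⟩ := mem_glueLattice.1 hx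
    exact mem_glueLattice.2 ⟨z, Submodule.mem_sup_left hz, hxz⟩
  · rw [Submodule.span_singleton_le_iff_mem]
    exact linearCombination_mem_glueLattice
      (Submodule.mem_sup_right (Submodule.mem_span_singleton_self _))

/-- Glue vectors for an integral lattice `Λ` whose discriminant group is an elementary abelian
`2`-group: `b` induces an isomorphism of `HypSpace m` with the dual quotient, under which the polar
form corresponds to `2⟪x, y⟫` modulo `2`. -/
structure IsHyperbolicGlue (Λ : Submodule ℤ (E n)) (b : Fin m × Bool → E n) : Prop where
  le_dual : Λ ≤ dualLattice Λ
  mem_dual : ∀ a, b a ∈ dualLattice Λ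
  two_smul_mem : ∀ a, (2 : ℤ) • b a ∈ Λ
  exists_two_inner_eq : ∀ a c, ∃ k : ℤ, 2 * ⟪b a, b c⟫ = k ∧
    (k : ZMod 2) = QuadraticMap.polar (form m) (basisVec a) (basisVec c)
  mem_of_inner : ∀ x ∈ dualLattice Λ, (∀ a, ∃ k : ℤ, ⟪x, b a⟫ = k) → x ∈ Λ

namespace IsHyperbolicGlue

theorem linearCombination_mem (hb : IsHyperbolicGlue Λ b) {z : Fin m × Bool → ℤ}
    (hz : reduction m z = 0) : Fintype.linearCombination ℤ b z ∈ Λ := by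
  obtain ⟨y, rfl⟩ := exists_eq_two_smul_of_reduction_eq_zero hz
  rw [map_smul, Fintype.linearCombination_apply, Finset.smul_sum]
  refine Submodule.sum_mem _ fun a _ => ?_
  rw [smul_comm]
  exact Λ.smul_mem _ (hb.two_smul_mem a)

theorem glueLattice_bot (hb : IsHyperbolicGlue Λ b) : glueLattice Λ b ⊥ = Λ := by
  refine le_antisymm (fun x hx => ?_) (le_glueLattice _)
  obtain ⟨z, hz, hxz⟩ := mem_glueLattice.1 hx
  exact (Submodule.sub_mem_iff_left _
    (hb.linearCombination_mem ((Submodule.mem_bot _).1 hz))).1 hxz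

theorem glueLattice_flag_le (hb : IsHyperbolicGlue Λ b) {L : Submodule ℤ (E n)} (hΛL : Λ ≤ L)
    {k : ℕ} (hk : k ≤ m) (hmem : ∀ l : Fin m, (l : ℕ) < k → b (l, false) ∈ L) :
    glueLattice Λ b (flag m k) ≤ L := by
  induction k with
  | zero => rwa [flag_zero, hb.glueLattice_bot]
  | succ k ih =>
    lift k to Fin m using hk
    rw [flag_succ, ← reduction_single, glueLattice_sup_span,
      Fintype.linearCombination_apply_single, one_smul]
    exact sup_le (ih k.2.le fun l hl => hmem l (hl.trans (Nat.lt_succ_self _)))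
      ((Submodule.span_singleton_le_iff_mem _ _).2 (hmem k (Nat.lt_succ_self _)))

theorem exists_two_inner_linearCombination_eq (hb : IsHyperbolicGlue Λ b) (z y : Fin m × Bool → ℤ) :
    ∃ k : ℤ, 2 * ⟪Fintype.linearCombination ℤ b z, Fintype.linearCombination ℤ b y⟫ = k ∧
      (k : ZMod 2) = QuadraticMap.polar (form m) (reduction m z) (reduction m y) := by
  choose N hN hpolar using hb.exists_two_inner_eq
  have hred : ∀ z : Fin m × Bool → ℤ,
      reduction m z = ∑ a, (z a : ZMod 2) • (basisVec a : HypSpace m) := fun z =>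
    pi_eq_sum_univ' _
  refine ⟨∑ c, ∑ a, z a * y c * N a c, ?_, ?_⟩
  · simp only [Fintype.linearCombination_apply, sum_inner, inner_sum, ← Int.cast_smul_eq_zsmul ℝ,
      real_inner_smul_left, real_inner_smul_right, Finset.mul_sum, Int.cast_sum, Int.cast_mul, ← hN]
    exact Finset.sum_congr rfl fun a _ => Finset.sum_congr rfl fun c _ => by ring
  · rw [← QuadraticMap.polarBilin_apply_apply, hred z, hred y]
    simp only [map_sum, map_smul, LinearMap.sum_apply, LinearMap.smul_apply, smul_eq_mul,
      QuadraticMap.polarBilin_apply_apply, Int.cast_sum, Int.cast_mul, hpolar, Finset.mul_sum]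
    exact Finset.sum_congr rfl fun a _ => Finset.sum_congr rfl fun c _ => by ring

theorem linearCombination_mem_dual (hb : IsHyperbolicGlue Λ b) (z : Fin m × Bool → ℤ) :
    Fintype.linearCombination ℤ b z ∈ dualLattice Λ := by
  rw [Fintype.linearCombination_apply]
  exact Submodule.sum_mem _ fun a _ => Submodule.smul_mem _ _ (hb.mem_dual a)

theorem glueLattice_le_dual (hb : IsHyperbolicGlue Λ b) (C : Submodule (ZMod 2) (HypSpace m)) :
    glueLattice Λ b C ≤ dualLattice Λ :=
  sup_le hb.le_dual fun _ ⟨z, _, hz⟩ => hz ▸ hb.linearCombination_mem_dual z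

theorem exists_two_inner_eq_coord (hb : IsHyperbolicGlue Λ b) {x : E n} {z : Fin m × Bool → ℤ}
    (hx : x - Fintype.linearCombination ℤ b z ∈ Λ) (i : Fin m) (s : Bool) :
    ∃ k : ℤ, 2 * ⟪x, b (i, s)⟫ = k ∧ (k : ZMod 2) = reduction m z (i, !s) := by
  obtain ⟨k, hk, hpolar⟩ := hb.exists_two_inner_linearCombination_eq z (Pi.single (i, s) 1)
  rw [Fintype.linearCombination_apply_single, one_smul] at hk
  rw [reduction_single, polar_basisVec] at hpolar
  obtain ⟨l, hl⟩ := mem_dualLattice.1 (hb.mem_dual (i, s)) _ hx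
  refine ⟨2 * l + k, ?_, ?_⟩
  · rw [real_inner_comm, inner_sub_left] at hl
    push_cast
    linarith
  · have h2 : (2 : ZMod 2) = 0 := rfl
    rw [Int.cast_add, Int.cast_mul, hpolar, Int.cast_ofNat, h2, zero_mul, zero_add]

theorem exists_sub_mem (hb : IsHyperbolicGlue Λ b) {x : E n} (hx : x ∈ dualLattice Λ) :
    ∃ z, x - Fintype.linearCombination ℤ b z ∈ Λ := by
  choose k hk using fun a => mem_dualLattice.1 hx _ (hb.two_smul_mem a)
  refine ⟨fun a => k (a.1, !a.2), hb.mem_of_inner _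
    (sub_mem hx (hb.linearCombination_mem_dual _)) fun ⟨i, s⟩ => ?_⟩
  obtain ⟨l, hl, hlk⟩ := hb.exists_two_inner_eq_coord
    (x := Fintype.linearCombination ℤ b fun a => k (a.1, !a.2))
    (by rw [sub_self]; exact Λ.zero_mem) i s
  rw [reduction_apply, Bool.not_not, eq_comm] at hlk
  obtain ⟨r, hr⟩ := (ZMod.intCast_eq_intCast_iff_dvd_sub _ _ 2).1 hlk.symm
  refine ⟨r, ?_⟩
  have hkr : (k (i, s) : ℝ) - l = 2 * r := mod_cast hr
  have hki := hk (i, s)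
  rw [← Int.cast_smul_eq_zsmul ℝ, real_inner_smul_right] at hki
  push_cast at hki
  rw [inner_sub_left]
  linarith

theorem exists_eq_glueLattice (hb : IsHyperbolicGlue Λ b) {L : Submodule ℤ (E n)}
    (hL : LatticeIsIntegral L) (hΛL : Λ ≤ L) :
    ∃ C : Submodule (ZMod 2) (HypSpace m), IsTotallyIsotropic C ∧ L = glueLattice Λ b C := by
  let C : Submodule (ZMod 2) (HypSpace m) := AddSubgroup.toZModSubmodule 2
    ((L.comap (Fintype.linearCombination ℤ b)).map (reduction m)).toAddSubgroup
  refine ⟨C, ?_, le_antisymm (fun x hx => ?_) fun x hx => ?_⟩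
  · rintro _ ⟨z, hz, rfl⟩ _ ⟨y, hy, rfl⟩
    obtain ⟨k, hk, hpolar⟩ := hb.exists_two_inner_linearCombination_eq z y
    obtain ⟨l, hl⟩ := hL _ hz _ hy
    have hkl : k = 2 * l := by
      rw [hl] at hk
      exact_mod_cast hk.symm
    exact hpolar.symm.trans ((ZMod.intCast_zmod_eq_zero_iff_dvd k 2).2 ⟨l, hkl⟩)
  · obtain ⟨z, hz⟩ := hb.exists_sub_mem
      (mem_dualLattice.2 fun y hy => hL x hx y (hΛL hy))
    exact mem_glueLattice.2 ⟨z, ⟨z, (L.sub_mem_iff_right hx).1 (hΛL hz), rfl⟩, hz⟩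
  · obtain ⟨z, ⟨y, hy, hyz⟩, hxz⟩ := mem_glueLattice.1 hx
    have hzy := hb.linearCombination_mem (z := z - y) (by rw [map_sub, hyz, sub_self])
    rw [map_sub] at hzy
    have hx : x = x - Fintype.linearCombination ℤ b z + (Fintype.linearCombination ℤ b z -
      Fintype.linearCombination ℤ b y) + Fintype.linearCombination ℤ b y := by abel
    rw [hx]
    exact add_mem (add_mem (hΛL hxz) (hΛL hzy)) hy

theorem exists_halfTurn_sub_mem (hb : IsHyperbolicGlue Λ b) {i j : Fin m} {s t : Bool}
    (hij : i ≠ j) {v : Fin 4 → E n} (hv : IsHalfTurnFrame Λ (b (i, s)) (b (j, t)) v) {x : E n}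
    {z : Fin m × Bool → ℤ} (hx : x - Fintype.linearCombination ℤ b z ∈ Λ) :
    ∃ y, reduction m y = siegel (a := (i, s)) (b := (j, t)) hij (reduction m z) ∧
      halfTurn v x - Fintype.linearCombination ℤ b y ∈ Λ := by
  obtain ⟨k, hk, hkz⟩ := hb.exists_two_inner_eq_coord hx i s
  obtain ⟨l, hl, hlz⟩ := hb.exists_two_inner_eq_coord hx j t
  have hxdual : x ∈ dualLattice Λ :=
    hb.glueLattice_le_dual ⊤ (mem_glueLattice.2 ⟨z, trivial, hx⟩)
  refine ⟨z - Pi.single (i, s) l - Pi.single (j, t) k, ?_, ?_⟩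
  · rw [siegel_apply, ← hkz, ← hlz]
    funext c
    rw [← ZModModule.sub_eq_add (reduction m z), ← ZModModule.sub_eq_add]
    simp only [reduction_apply, Pi.sub_apply, Int.cast_sub, Pi.single_apply, Int.cast_ite,
      Int.cast_zero]
  · have hturn := hv.halfTurn_sub_mem hxdual
    rw [hk, hl, Int.cast_smul_eq_zsmul, Int.cast_smul_eq_zsmul] at hturn
    convert add_mem hturn hx using 1
    simp only [map_sub, Fintype.linearCombination_apply_single]
    abel

theorem isometricLattices_map_siegel (hb : IsHyperbolicGlue Λ b) {i j : Fin m} {s t : Bool}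
    (hij : i ≠ j) {v : Fin 4 → E n} (hv : IsHalfTurnFrame Λ (b (i, s)) (b (j, t)) v)
    (C : Submodule (ZMod 2) (HypSpace m)) :
    IsometricLattices (glueLattice Λ b C)
      (glueLattice Λ b (C.map (siegel (a := (i, s)) (b := (j, t)) hij).toLinearMap)) := by
  have hΛ : ∀ y ∈ Λ, halfTurn v y ∈ Λ := fun y hy => by
    obtain ⟨z, hz, hyz⟩ := hb.exists_halfTurn_sub_mem hij hv (z := 0) (by simpa using hy)
    rw [map_zero, map_zero] at hz
    exact (Submodule.sub_mem_iff_left _ (hb.linearCombination_mem hz)).1 hyz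
  refine ⟨halfTurn v, Set.Subset.antisymm ?_ fun y hy => ?_⟩
  · rintro _ ⟨x, hx, rfl⟩
    obtain ⟨z, hz, hxz⟩ := mem_glueLattice.1 hx
    obtain ⟨y, hy, hxy⟩ := hb.exists_halfTurn_sub_mem hij hv hxz
    exact mem_glueLattice.2 ⟨y, hy ▸ ⟨_, hz, rfl⟩, hxy⟩
  · obtain ⟨z, ⟨c, hc, hcz⟩, hyz⟩ := mem_glueLattice.1 hy
    obtain ⟨w, rfl⟩ := reduction_surjective c
    obtain ⟨z', hz', hwz'⟩ := hb.exists_halfTurn_sub_mem hij hv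
      (x := Fintype.linearCombination ℤ b w) (z := w) (by rw [sub_self]; exact Λ.zero_mem)
    have hzz' := hb.linearCombination_mem (z := z - z') (by
      rw [map_sub, hz', sub_eq_zero]; exact hcz.symm)
    have hdiff : y - halfTurn v (Fintype.linearCombination ℤ b w) ∈ Λ := by
      rw [map_sub] at hzz'
      convert sub_mem (add_mem hyz hzz') hwz' using 1
      abel
    refine ⟨Fintype.linearCombination ℤ b w +
      halfTurn v (y - halfTurn v (Fintype.linearCombination ℤ b w)), add_mem
        (linearCombination_mem_glueLattice hc) (le_glueLattice C (hΛ _ hdiff)), ?_⟩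
    rw [map_add, halfTurn_halfTurn, add_sub_cancel]

theorem isometricLattices_map (hb : IsHyperbolicGlue Λ b)
    (hframe : ∀ a c : Fin m × Bool, a.1 ≠ c.1 → ∃ v, IsHalfTurnFrame Λ (b a) (b c) v)
    {S : Set (Fin m)} {g : HypSpace m ≃ₗ[ZMod 2] HypSpace m} (hg : g ∈ siegelGroup S)
    (C : Submodule (ZMod 2) (HypSpace m)) :
    IsometricLattices (glueLattice Λ b C) (glueLattice Λ b (C.map g.toLinearMap)) := by
  induction hg using Subgroup.closure_induction generalizing C with
  | mem g hg =>
    obtain ⟨⟨i, s⟩, ⟨j, t⟩, hij, -, -, rfl⟩ := hg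
    obtain ⟨v, hv⟩ := hframe (i, s) (j, t) hij
    exact hb.isometricLattices_map_siegel hij hv C
  | one =>
    have hC : C.map (1 : HypSpace m ≃ₗ[ZMod 2] HypSpace m).toLinearMap = C := Submodule.map_id C
    rw [hC]
    exact IsometricLattices.refl _
  | mul g h _ _ ihg ihh =>
    have hC : C.map (g * h).toLinearMap = (C.map h.toLinearMap).map g.toLinearMap :=
      Submodule.map_comp _ _ C
    rw [hC]
    exact (ihh C).trans (ihg _)
  | inv g _ ih =>
    have hC : (C.map g⁻¹.toLinearMap).map g.toLinearMap = C := by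
      rw [← Submodule.map_comp]
      convert Submodule.map_id C
      exact LinearMap.ext fun x => g.apply_symm_apply x
    simpa only [hC] using (ih (C.map g⁻¹.toLinearMap)).symm

theorem exists_isNormalForm_isometricLattices {b : Fin (m + 1) × Bool → E n}
    (hb : IsHyperbolicGlue Λ b)
    (hframe : ∀ a c : Fin (m + 1) × Bool, a.1 ≠ c.1 → ∃ v, IsHalfTurnFrame Λ (b a) (b c) v)
    {L : Submodule ℤ (E n)} (hL : LatticeIsIntegral L) (hΛL : Λ ≤ L) :
    ∃ C, IsNormalForm C ∧ IsometricLattices L (glueLattice Λ b C) := by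
  obtain ⟨C, hC, rfl⟩ := hb.exists_eq_glueLattice hL hΛL
  obtain ⟨g, hg, hnormal⟩ := hC.exists_isNormalForm
  exact ⟨_, hnormal, hb.isometricLattices_map hframe hg C⟩

end IsHyperbolicGlue

end Glue

section BarnesWall

open HypSpace

/-- The sign pattern of `f0`. -/
def twist (i : Fin 16) : ℤ := if (i : ℕ) % 8 = 0 then -1 else 1

/-- The vector with doubled integer coordinates `z`, up to the sign pattern of `f0`, so that `f0`
itself has constant coordinates. -/
def halfVec : (Fin 16 → ℤ) →ₗ[ℤ] E 16 where
  toFun z := vec fun i => twist i * z i / 2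
  map_add' z w := by
    ext i
    simp only [vec, Pi.add_apply, PiLp.add_apply, WithLp.equiv_symm_apply, Int.cast_add]
    ring
  map_smul' k z := by
    ext i
    simp only [vec, Pi.smul_apply, PiLp.smul_apply, WithLp.equiv_symm_apply, smul_eq_mul,
      Int.cast_mul, zsmul_eq_mul, eq_intCast, Int.cast_id]
    ring

theorem halfVec_apply (z : Fin 16 → ℤ) (i : Fin 16) : halfVec z i = twist i * z i / 2 := rfl

theorem twist_mul_self (i : Fin 16) : twist i * twist i = 1 := by
  unfold twist
  split_ifs <;> rfl

theorem inner_halfVec (z w : Fin 16 → ℤ) : ⟪halfVec z, halfVec w⟫ = ((z ⬝ᵥ w : ℤ) : ℝ) / 4 := by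
  have htwist (i : Fin 16) : (twist i : ℝ) * twist i = 1 := mod_cast twist_mul_self i
  simp only [PiLp.inner_apply, halfVec_apply, RCLike.inner_apply, conj_trivial, dotProduct,
    Int.cast_sum, Int.cast_mul, Finset.sum_div]
  refine Finset.sum_congr rfl fun i _ => ?_
  linear_combination (z i * w i / 4 : ℝ) * htwist i

theorem exists_inner_halfVec_eq_iff {z w : Fin 16 → ℤ} :
    (∃ k : ℤ, ⟪halfVec z, halfVec w⟫ = k) ↔ 4 ∣ z ⬝ᵥ w := by
  simp only [inner_halfVec, div_eq_iff (four_ne_zero' ℝ), dvd_iff_exists_eq_mul_left]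
  exact exists_congr fun k => by norm_cast

theorem intVec_eq_halfVec (y : Fin 16 → ℤ) : intVec y = halfVec fun i => 2 * (twist i * y i) := by
  ext i
  have htwist : (twist i : ℝ) * twist i = 1 := mod_cast twist_mul_self i
  simp only [intVec, WithLp.equiv_symm_apply, halfVec_apply, Int.cast_mul, Int.cast_ofNat]
  linear_combination -(y i : ℝ) * htwist

/-- The indicator function of the face of the cube `{0, 1}⁴` (in binary) on which all coordinates in
`S` vanish. -/
def face (S : Finset (Fin 4)) (i : Fin 16) : ℤ :=
  if ∀ k ∈ S, (i : ℕ).testBit k = false then 1 else 0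

theorem sum_univ_sixteen (z : Fin 16 → ℤ) : ∑ i, z i = z 0 + z 1 + z 2 + z 3 + z 4 + z 5 + z 6 +
    z 7 + z 8 + z 9 + z 10 + z 11 + z 12 + z 13 + z 14 + z 15 := by
  simp only [Fin.sum_univ_castSucc, Fin.sum_univ_zero, zero_add]
  rfl

theorem forall_dvd_dotProduct_face_singleton {d : ℤ} {z : Fin 16 → ℤ} :
    (∀ k, d ∣ z ⬝ᵥ face {k}) ↔
    d ∣ z 0 + z 2 + z 4 + z 6 + z 8 + z 10 + z 12 + z 14 ∧
    d ∣ z 0 + z 1 + z 4 + z 5 + z 8 + z 9 + z 12 + z 13 ∧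
    d ∣ z 0 + z 1 + z 2 + z 3 + z 8 + z 9 + z 10 + z 11 ∧
    d ∣ z 0 + z 1 + z 2 + z 3 + z 4 + z 5 + z 6 + z 7 := by
  simp [Fin.forall_fin_succ, dotProduct, sum_univ_sixteen, face, Nat.testBit]

/-- The integer model of `BW₁₆`: up to the factor `2` and the signs `twist`, its vectors are those
with all coordinates of the same parity, whose sums over the whole cube and over the facets
`bit k = 0` are divisible by `4`. -/
def scaledBW : Submodule ℤ (Fin 16 → ℤ) where
  carrier := {z | (∀ i, 2 ∣ z i - z 0) ∧ 4 ∣ ∑ i, z i ∧ ∀ k, 4 ∣ z ⬝ᵥ face {k}}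
  zero_mem' := by simp
  add_mem' {z w} hz hw := by
    refine ⟨fun i => ?_, ?_, fun k => ?_⟩
    · simpa only [Pi.add_apply, add_sub_add_comm] using dvd_add (hz.1 i) (hw.1 i)
    · simpa only [Pi.add_apply, Finset.sum_add_distrib] using dvd_add hz.2.1 hw.2.1
    · simpa only [add_dotProduct] using dvd_add (hz.2.2 k) (hw.2.2 k)
  smul_mem' r z hz := by
    refine ⟨fun i => ?_, ?_, fun k => ?_⟩
    · simpa only [Pi.smul_apply, smul_eq_mul, mul_sub] using (hz.1 i).mul_left r
    · simpa only [Pi.smul_apply, smul_eq_mul, Finset.mul_sum] using hz.2.1.mul_left r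
    · simpa only [smul_dotProduct, smul_eq_mul] using (hz.2.2 k).mul_left r

instance : DecidablePred (· ∈ scaledBW) := fun z =>
  inferInstanceAs (Decidable ((∀ i, 2 ∣ z i - z 0) ∧ 4 ∣ ∑ i, z i ∧ ∀ k, 4 ∣ z ⬝ᵥ face {k}))

/-- The supports of the generators `g1, …, g11`. -/
def gSupport : Fin 11 → Finset (Fin 16) :=
  ![{0, 4, 8, 12}, {0, 2, 4, 6}, {0, 2, 8, 10}, {0, 2, 12, 14}, {0, 1, 2, 3}, {0, 1, 4, 5},
    {0, 1, 6, 7}, {0, 1, 8, 9}, {0, 1, 10, 11}, {0, 1, 12, 13}, {0, 1, 14, 15}]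

/-- The generators `g1, …, g11`. -/
def gVec (j : Fin 11) : E 16 := ∑ i ∈ gSupport j, εv i

theorem gVec_eq_cons : gVec = ![g1, g2, g3, g4, g5, g6, g7, g8, g9, g10, g11] := by
  funext j
  fin_cases j <;>
    simp [gVec, gSupport, add_assoc, g1, g2, g3, g4, g5, g6, g7, g8, g9, g10, g11]

theorem gVec_eq_intVec (j : Fin 11) :
    gVec j = intVec fun i => if i ∈ gSupport j then 1 else 0 := by
  ext i
  simp [gVec, intVec, εv, Pi.single_apply]

theorem f0_eq_halfVec : f0 = halfVec 1 := by
  ext i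
  fin_cases i <;> simp [f0, vec, halfVec_apply, twist]

theorem BW16_le_iff {L : Submodule ℤ (E 16)} :
    BW16 ≤ L ↔ (∀ i, (2 : ℝ) • εv i ∈ L) ∧ f0 ∈ L ∧ ∀ j, gVec j ∈ L := by
  have hgens : ({f0, g1, g2, g3, g4, g5, g6, g7, g8, g9, g10, g11} : Set (E 16)) =
      {f0} ∪ Set.range gVec := by
    rw [gVec_eq_cons]
    simp only [Matrix.range_cons, Matrix.range_empty, Set.union_empty, Set.singleton_union]
  rw [BW16, hgens, Submodule.span_le, Set.union_subset_iff, Set.union_subset_iff,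
    Set.range_subset_iff, Set.range_subset_iff, Set.singleton_subset_iff]
  rfl

theorem intVec_mem_BW16_of_even {y : Fin 16 → ℤ} (hy : ∀ i, 2 ∣ y i) : intVec y ∈ BW16 := by
  choose k hk using hy
  have hsum : intVec y = ∑ i, k i • (2 : ℝ) • (εv i : E 16) := by
    ext j
    simp [intVec, hk, εv, Pi.single_apply, mul_comm]
  rw [hsum]
  exact Submodule.sum_mem _ fun i _ => Submodule.smul_mem _ _ ((BW16_le_iff.1 le_rfl).1 i)

/-- The `g_j` generate the second order Reed–Muller code of length `16` modulo `2`. -/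
theorem intVec_mem_BW16 {y : Fin 16 → ℤ} (hsum : 2 ∣ ∑ i, y i)
    (hface : ∀ k, 2 ∣ y ⬝ᵥ face {k}) :
    intVec y ∈ BW16 := by
  let c : Fin 11 → ℤ := ![y 12 - y 13 - y 14 + y 15, y 6 - y 7, y 10 - y 11, y 14 - y 15,
    y 3, y 5, y 7, y 9, y 11, y 13, y 15]
  have hsplit : intVec y = intVec (fun i => y i - ∑ j, if i ∈ gSupport j then c j else 0) +
      ∑ j, c j • gVec j := by
    ext i
    simp [intVec, gVec_eq_intVec]
  rw [sum_univ_sixteen] at hsum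
  rw [forall_dvd_dotProduct_face_singleton] at hface
  rw [hsplit]
  refine add_mem (intVec_mem_BW16_of_even fun i => ?_)
    (Submodule.sum_mem _ fun j _ => Submodule.smul_mem _ _ ((BW16_le_iff.1 le_rfl).2.2 j))
  fin_cases i <;> simp [Fin.sum_univ_succ, gSupport, c] <;> omega

theorem exists_eq_add_two_mul {z : Fin 16 → ℤ} (hz : z ∈ scaledBW) :
    ∃ (c : ℤ) (y : Fin 16 → ℤ), z = (fun i => c + 2 * y i) ∧ 2 ∣ ∑ i, y i := by
  choose y hy using hz.1
  have hsum := hz.2.1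
  have hzy : z = fun i => z 0 + 2 * y i := funext fun i => by rw [← hy, add_sub_cancel]
  refine ⟨z 0, y, hzy, ?_⟩
  rw [hzy] at hsum
  simp only [Finset.sum_add_distrib, ← Finset.mul_sum, Finset.sum_const, Finset.card_univ,
    Fintype.card_fin, nsmul_eq_mul] at hsum
  omega

theorem four_dvd_dotProduct {z w : Fin 16 → ℤ} (hz : z ∈ scaledBW) (hw : w ∈ scaledBW) :
    4 ∣ z ⬝ᵥ w := by
  obtain ⟨c, y, rfl, k, hk⟩ := exists_eq_add_two_mul hz
  obtain ⟨d, x, rfl, l, hl⟩ := exists_eq_add_two_mul hw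
  have hexpand : (fun i => c + 2 * y i) ⬝ᵥ (fun i => d + 2 * x i) =
      16 * c * d + 2 * c * ∑ i, x i + 2 * d * ∑ i, y i + 4 * (y ⬝ᵥ x) := by
    have hconst : (16 * c * d : ℤ) = ∑ _i : Fin 16, c * d := by simp [mul_assoc]
    simp only [dotProduct, hconst, Finset.mul_sum, ← Finset.sum_add_distrib]
    exact Finset.sum_congr rfl fun i _ => by ring
  exact ⟨4 * c * d + c * l + d * k + y ⬝ᵥ x, by rw [hexpand, hk, hl]; ring⟩

theorem halfVec_mem_BW16 {z : Fin 16 → ℤ} (hz : z ∈ scaledBW) : halfVec z ∈ BW16 := by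
  obtain ⟨c, y, rfl, -⟩ := exists_eq_add_two_mul hz
  have hsplit : (halfVec fun i => c + 2 * y i) = c • f0 + intVec fun i => twist i * y i := by
    rw [f0_eq_halfVec, intVec_eq_halfVec, ← map_smul, ← map_add]
    congr 1
    funext i
    simp [← mul_assoc, twist_mul_self]
  obtain ⟨-, hsum, hface⟩ := hz
  rw [sum_univ_sixteen] at hsum
  rw [forall_dvd_dotProduct_face_singleton] at hface
  rw [hsplit]
  refine add_mem (Submodule.smul_mem _ _ (BW16_le_iff.1 le_rfl).2.1)
    (intVec_mem_BW16 ?_ (forall_dvd_dotProduct_face_singleton.2 ?_))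
  · simp [sum_univ_sixteen, twist]
    omega
  · simp [twist]
    omega

theorem BW16_eq_map : BW16 = scaledBW.map halfVec := by
  refine le_antisymm (BW16_le_iff.2 ⟨fun i => Submodule.mem_map.2
    ⟨fun k => 2 * (twist k * (Pi.single i 2 : Fin 16 → ℤ) k), ?_, ?_⟩, Submodule.mem_map.2
    ⟨1, by decide +kernel, f0_eq_halfVec.symm⟩, fun j => ?_⟩) ?_
  · revert i
    decide +kernel
  · rw [← intVec_eq_halfVec]
    ext k
    simp [intVec, εv, Pi.single_apply]
  · rw [gVec_eq_intVec, intVec_eq_halfVec]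
    refine Submodule.mem_map_of_mem ?_
    revert j
    decide +kernel
  · rintro _ ⟨z, hz, rfl⟩
    exact halfVec_mem_BW16 hz

theorem halfVec_mem_dual_iff {z : Fin 16 → ℤ} :
    halfVec z ∈ dualLattice BW16 ↔ ∀ w ∈ scaledBW, 4 ∣ z ⬝ᵥ w := by
  rw [mem_dualLattice, BW16_eq_map]
  simp only [Submodule.mem_map, forall_exists_index, and_imp, forall_apply_eq_imp_iff₂,
    exists_inner_halfVec_eq_iff]

theorem exists_halfVec_eq {x : E 16} (hx : x ∈ dualLattice BW16) : ∃ z, halfVec z = x := by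
  choose k hk using fun i => mem_dualLattice.1 hx _ ((BW16_le_iff.1 le_rfl).1 i)
  refine ⟨fun i => twist i * k i, ?_⟩
  ext i
  have htwist : (twist i : ℝ) * twist i = 1 := mod_cast twist_mul_self i
  have hi : 2 * x i = k i := by
    rw [← hk i, real_inner_smul_right, εv, EuclideanSpace.inner_single_right]
    simp
  simp only [halfVec_apply, Int.cast_mul]
  linear_combination (k i / 2 : ℝ) * htwist - hi / 2

/-- The glue vectors of `BW₁₆` in integer coordinates: `e_k` is twice an edge of the cube and `f_k`
is the opposite facet. -/
def glueCoord : Fin 4 × Bool → Fin 16 → ℤ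
  | (k, false) => 2 • face {k}ᶜ
  | (k, true) => face {k}

/-- The glue vectors of `BW₁₆`. -/
def glueVec (a : Fin 4 × Bool) : E 16 := halfVec (glueCoord a)

theorem face_compl_singleton (k : Fin 4) :
    face {k}ᶜ = Pi.single 0 1 + Pi.single ⟨2 ^ (k : ℕ), Nat.pow_lt_pow_right one_lt_two k.2⟩ 1 := by
  revert k
  decide +kernel

theorem four_dvd_dotProduct_glueCoord {z : Fin 16 → ℤ} (hz : z ∈ scaledBW) (a : Fin 4 × Bool) :
    4 ∣ z ⬝ᵥ glueCoord a := by
  obtain ⟨k, _ | _⟩ := a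
  · rw [glueCoord, face_compl_singleton, dotProduct_smul, dotProduct_add, dotProduct_single_one,
      dotProduct_single_one, nsmul_eq_mul, Nat.cast_ofNat]
    have hparity := hz.1 ⟨2 ^ (k : ℕ), Nat.pow_lt_pow_right one_lt_two k.2⟩
    omega
  · exact hz.2.2 k

theorem glueVec_mem_dual (a : Fin 4 × Bool) : glueVec a ∈ dualLattice BW16 :=
  halfVec_mem_dual_iff.2 fun w hw => by
    rw [dotProduct_comm]
    exact four_dvd_dotProduct_glueCoord hw a

/-- `e_k` is the class of the difference `{0, 2 ^ k}`, and these classes add up along the binary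
expansion. -/
theorem pair_sub_sum_mem_scaledBW (i : Fin 16) :
    (Pi.single 0 2 + Pi.single i 2 - ∑ k : Fin 4, if (i : ℕ).testBit k then glueCoord (k, false)
      else 0) ∈ scaledBW := by
  revert i
  decide +kernel

theorem two_smul_glueCoord_mem (a : Fin 4 × Bool) : (2 : ℤ) • glueCoord a ∈ scaledBW := by
  revert a
  decide +kernel

theorem glueCoord_dotProduct (a c : Fin 4 × Bool) :
    ∃ k : ℤ, glueCoord a ⬝ᵥ glueCoord c = 2 * k ∧
      (k : ZMod 2) = QuadraticMap.polar (form 4) (basisVec a) (basisVec c) := by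
  have hcheck : ∀ a c : Fin 4 × Bool, glueCoord a ⬝ᵥ glueCoord c =
      2 * (glueCoord a ⬝ᵥ glueCoord c / 2) ∧
        ((glueCoord a ⬝ᵥ glueCoord c / 2 : ℤ) : ZMod 2) =
          (Pi.single a 1 : Fin 4 × Bool → ZMod 2) (c.1, !c.2) := by
    decide +kernel
  exact ⟨_, (hcheck a c).1, (hcheck a c).2.trans (polar_basisVec _ _ _).symm⟩

theorem mem_scaledBW_of_dvd {z : Fin 16 → ℤ} (hz : ∀ w ∈ scaledBW, 4 ∣ z ⬝ᵥ w)
    (hglue : ∀ a, 4 ∣ z ⬝ᵥ glueCoord a) : z ∈ scaledBW := by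
  refine ⟨fun i => ?_, ?_, fun k => ?_⟩
  · have hpair := hz _ (pair_sub_sum_mem_scaledBW i)
    rw [dotProduct_sub, dotProduct_sum, dvd_sub_left (Finset.dvd_sum fun k _ => ?_),
      dotProduct_add, dotProduct_single, dotProduct_single] at hpair
    · omega
    · split_ifs
      exacts [hglue _, by simp]
  · simpa only [dotProduct_one] using hz 1 (by decide +kernel)
  · exact hglue (k, true)

theorem isHyperbolicGlue_BW16 : IsHyperbolicGlue BW16 glueVec where
  le_dual := by
    intro x hx
    rw [BW16_eq_map] at hx
    obtain ⟨z, hz, rfl⟩ := hx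
    exact halfVec_mem_dual_iff.2 fun w hw => four_dvd_dotProduct hz hw
  mem_dual := glueVec_mem_dual
  two_smul_mem a := by
    rw [glueVec, ← map_smul]
    exact halfVec_mem_BW16 (two_smul_glueCoord_mem a)
  exists_two_inner_eq a c := by
    obtain ⟨k, hk, hpolar⟩ := glueCoord_dotProduct a c
    refine ⟨k, ?_, hpolar⟩
    rw [glueVec, glueVec, inner_halfVec, hk]
    push_cast
    ring
  mem_of_inner x hx hint := by
    obtain ⟨z, rfl⟩ := exists_halfVec_eq hx
    exact halfVec_mem_BW16 (mem_scaledBW_of_dvd (halfVec_mem_dual_iff.1 hx) fun a =>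
      exists_inner_halfVec_eq_iff.1 (hint a))

/-- The four vectors of a half-turn frame for the glue vectors `a` and `c`, determined by its first
vector `v` and its half sum `h`. -/
def frameCoord (a c : Fin 4 × Bool) (v h : Fin 16 → ℤ) : Fin 4 → Fin 16 → ℤ :=
  ![v, (2 : ℤ) • glueCoord a - v, (2 : ℤ) • glueCoord c - v,
    (2 : ℤ) • h - (2 : ℤ) • glueCoord a - (2 : ℤ) • glueCoord c + v]

theorem isHalfTurnFrame_frameCoord {a c : Fin 4 × Bool} {v h : Fin 16 → ℤ} (hv : v ∈ scaledBW)
    (hh : h ∈ scaledBW) (hframe : ∀ r s, frameCoord a c v h r ⬝ᵥ frameCoord a c v h s =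
      if r = s then 16 else 0) :
    IsHalfTurnFrame BW16 (glueVec a) (glueVec c) fun r => halfVec (frameCoord a c v h r) where
  mem r := by
    have ha := two_smul_glueCoord_mem a
    have hc := two_smul_glueCoord_mem c
    refine halfVec_mem_BW16 ?_
    fin_cases r
    exacts [hv, sub_mem ha hv, sub_mem hc hv,
      add_mem (sub_mem (sub_mem (scaledBW.smul_mem 2 hh) ha) hc) hv]
  inner_eq r s := by
    rw [inner_halfVec, hframe]
    split_ifs <;> norm_num
  half_sum_mem := by
    have hsum : ∑ r, frameCoord a c v h r = (2 : ℤ) • h := by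
      simp only [frameCoord, Fin.sum_univ_four, Matrix.cons_val]
      abel
    rw [← map_sum, hsum, map_smul, ← Int.cast_smul_eq_zsmul ℝ, smul_smul]
    simpa using halfVec_mem_BW16 hh
  add_eq_left := by
    rw [← map_add]
    change halfVec (v + ((2 : ℤ) • glueCoord a - v)) = _
    rw [add_sub_cancel, map_smul, ← Int.cast_smul_eq_zsmul ℝ, Int.cast_ofNat]
    rfl
  add_eq_right := by
    rw [← map_add]
    change halfVec (v + ((2 : ℤ) • glueCoord c - v)) = _
    rw [add_sub_cancel, map_smul, ← Int.cast_smul_eq_zsmul ℝ, Int.cast_ofNat]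
    rfl

theorem exists_isHalfTurnFrame_BW16 (a c : Fin 4 × Bool) (hac : a.1 ≠ c.1) :
    ∃ v, IsHalfTurnFrame BW16 (glueVec a) (glueVec c) v := by
  suffices ∃ v ∈ scaledBW, ∃ h ∈ scaledBW, ∀ r s,
      frameCoord a c v h r ⬝ᵥ frameCoord a c v h s = if r = s then 16 else 0 by
    obtain ⟨v, hv, h, hh, hframe⟩ := this
    exact ⟨_, isHalfTurnFrame_frameCoord hv hh hframe⟩
  obtain ⟨i, s⟩ := a
  obtain ⟨j, t⟩ := c
  have hcompl : ∀ i j : Fin 4, i ≠ j → ∃ k l, ({i, j, k, l} : Finset (Fin 4)) = Finset.univ := by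
    decide
  obtain ⟨k, l, hkl⟩ := hcompl i j hac
  cases s <;> cases t
  · refine ⟨4 • face Finset.univ, ?_, 2 • face {i, j}ᶜ, ?_, ?_⟩ <;>
      clear hkl <;> revert i j <;> decide +kernel
  · refine ⟨2 • face {j, l}, ?_, 2 • face {j, k}, ?_, ?_⟩ <;> revert i j k l <;> decide +kernel
  · refine ⟨2 • face {i, l}, ?_, 2 • face {i, k}, ?_, ?_⟩ <;> revert i j k l <;> decide +kernel
  · refine ⟨2 • face {i, j}, ?_, face ∅, ?_, ?_⟩ <;>
      clear hkl <;> revert i j <;> decide +kernel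

end BarnesWall

section Lattices16

open HypSpace

/-- The vectors `ε_i ± ε_j` for `i < j` in the same block of size `2 ^ k`: the root systems
`(A₁)¹⁶`, `(D₄)⁴` and `D₈ ⊥ D₈` for `k = 1, 2, 3`. -/
def blockRoots (k : ℕ) : Set (E 16) :=
  {v | ∃ i j : Fin 16, i.1 < j.1 ∧ i.1 / 2 ^ k = j.1 / 2 ^ k ∧ (v = εv i + εv j ∨ v = εv i - εv j)}

theorem exists_eq_add_zsmul_of_mem_blockRoots {k : ℕ} {v : E 16} (hv : v ∈ blockRoots k) :
    ∃ i j : Fin 16, i < j ∧ i.1 / 2 ^ k = j.1 / 2 ^ k ∧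
      ∃ c : ℤ, 2 ∣ c - 1 ∧ v = εv i + c • εv j := by
  obtain ⟨i, j, hij, hblock, hv⟩ := hv
  refine ⟨i, j, hij, hblock, ?_⟩
  obtain rfl | rfl := hv
  · exact ⟨1, by norm_num, by rw [one_smul]⟩
  · exact ⟨-1, by norm_num, by rw [neg_one_smul, sub_eq_add_neg]⟩

theorem setD4_eq_blockRoots : setD4 = blockRoots 2 := rfl

theorem setD8_eq_blockRoots : setD8 = blockRoots 3 := rfl

theorem setA1_eq_blockRoots : setA1 = blockRoots 1 := by
  ext v
  constructor
  · rintro ⟨i, hv⟩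
    exact ⟨_, _, Nat.lt_succ_self (2 * i.1), by simp only []; omega, hv⟩
  · rintro ⟨i, j, hij, hblock, hv⟩
    have hi : (⟨2 * (i.1 / 2), by omega⟩ : Fin 16) = i := Fin.ext (by simp only []; omega)
    have hj : (⟨2 * (i.1 / 2) + 1, by omega⟩ : Fin 16) = j := Fin.ext (by simp only []; omega)
    exact ⟨⟨i.1 / 2, by omega⟩, by simpa only [hi, hj] using hv⟩

theorem blockRoots_mono {k l : ℕ} (hkl : k ≤ l) : blockRoots k ⊆ blockRoots l := by
  obtain ⟨d, rfl⟩ := Nat.exists_eq_add_of_le hkl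
  rintro v ⟨i, j, hij, hblock, hv⟩
  refine ⟨i, j, hij, ?_, hv⟩
  rw [pow_add, ← Nat.div_div_eq_div_mul, hblock, Nat.div_div_eq_div_mul]

theorem smul_add_smul_mem_span_blockRoots {k : ℕ} {i j : Fin 16} (hij : i < j)
    (hblock : i.1 / 2 ^ k = j.1 / 2 ^ k) {a b : ℤ} (hab : 2 ∣ a - b) :
    a • εv i + b • εv j ∈ Submodule.span ℤ (blockRoots k) := by
  obtain ⟨c, hc⟩ := hab
  obtain rfl : a = b + 2 * c := by omega
  have hsplit : (b + 2 * c) • εv i + b • εv j =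
      (b + c) • (εv i + εv j : E 16) + c • (εv i - εv j) := by module
  rw [hsplit]
  exact add_mem (Submodule.smul_mem _ _ (Submodule.subset_span ⟨i, j, hij, hblock, Or.inl rfl⟩))
    (Submodule.smul_mem _ _ (Submodule.subset_span ⟨i, j, hij, hblock, Or.inr rfl⟩))

theorem two_smul_mem_span_blockRoots (i : Fin 16) :
    (2 : ℝ) • εv i ∈ Submodule.span ℤ (blockRoots 1) := by
  have htwo : (2 : ℝ) • εv i = (2 : ℤ) • (εv i : E 16) := by
    rw [← Int.cast_smul_eq_zsmul ℝ, Int.cast_ofNat]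
  rw [htwo]
  obtain hi | hi := Nat.mod_two_eq_zero_or_one i
  · simpa using smul_add_smul_mem_span_blockRoots (i := i) (j := ⟨i + 1, by omega⟩) (k := 1)
      (a := 2) (b := 0) (Nat.lt_succ_self _) (by simp only []; omega) (by norm_num)
  · simpa using smul_add_smul_mem_span_blockRoots (i := ⟨i - 1, by omega⟩) (j := i) (k := 1)
      (a := 0) (b := 2) (Fin.lt_def.2 (by simp only []; omega)) (by simp only []; omega)
      (by norm_num)

theorem sum_four_mem_span_blockRoots {k : ℕ} {a b c d : Fin 16} (hab : a < b)
    (hab_block : a.1 / 2 ^ k = b.1 / 2 ^ k) (hcd : c < d)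
    (hcd_block : c.1 / 2 ^ k = d.1 / 2 ^ k) :
    εv a + εv b + εv c + εv d ∈ Submodule.span ℤ (blockRoots k) := by
  rw [add_assoc (εv a + εv b)]
  exact add_mem (Submodule.subset_span ⟨a, b, hab, hab_block, Or.inl rfl⟩)
    (Submodule.subset_span ⟨c, d, hcd, hcd_block, Or.inl rfl⟩)

/-- The least `k` for which `gVec j` is a sum of two elements of `blockRoots k`. -/
def gLevel : Fin 11 → ℕ := ![3, 2, 2, 2, 1, 1, 1, 1, 1, 1, 1]

theorem gVec_mem_span_blockRoots (j : Fin 11) :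
    gVec j ∈ Submodule.span ℤ (blockRoots (gLevel j)) := by
  rw [gVec_eq_cons]
  fin_cases j <;>
    exact sum_four_mem_span_blockRoots (by decide) (by decide) (by decide) (by decide)

theorem BW16_le_of_blockRoots_subset {L : Submodule ℤ (E 16)} {k : ℕ} (hk : 1 ≤ k)
    (hroots : blockRoots k ⊆ L) (hf0 : f0 ∈ L) (hg : ∀ j, k < gLevel j → gVec j ∈ L) :
    BW16 ≤ L := by
  have hspan {l : ℕ} (hl : l ≤ k) : Submodule.span ℤ (blockRoots l) ≤ L :=
    Submodule.span_le.2 ((blockRoots_mono hl).trans hroots)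
  refine BW16_le_iff.2 ⟨fun i => hspan hk (two_smul_mem_span_blockRoots i), hf0, fun j => ?_⟩
  obtain hj | hj := le_or_gt (gLevel j) k
  exacts [hspan hj (gVec_mem_span_blockRoots j), hg j hj]

theorem halfVec_pair (i j : Fin 16) :
    halfVec (Pi.single i 2 + Pi.single j 2) = twist i • εv i + twist j • εv j := by
  have hsingle (i : Fin 16) : halfVec (Pi.single i 2) = twist i • εv i := by
    ext j
    obtain rfl | hij := eq_or_ne j i <;> simp [halfVec_apply, εv, *]
  rw [map_add, hsingle, hsingle]

theorem two_dvd_twist_sub (i : Fin 16) {c : ℤ} (hc : 2 ∣ c - 1) : 2 ∣ c - twist i := by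
  unfold twist
  split_ifs <;> omega

theorem glueVec_false (l : Fin 4) :
    glueVec (l, false) = twist 0 • εv 0 +
      twist ⟨2 ^ (l : ℕ), Nat.pow_lt_pow_right one_lt_two l.2⟩ •
        εv ⟨2 ^ (l : ℕ), Nat.pow_lt_pow_right one_lt_two l.2⟩ := by
  rw [← halfVec_pair, glueVec, glueCoord, face_compl_singleton, smul_add, ← Pi.single_smul,
    ← Pi.single_smul]
  rfl

theorem glueVec_false_mem_span_blockRoots {k : ℕ} {l : Fin 4} (hl : l < k) :
    glueVec (l, false) ∈ Submodule.span ℤ (blockRoots k) := by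
  rw [glueVec_false]
  refine smul_add_smul_mem_span_blockRoots (Fin.lt_def.2 (Nat.two_pow_pos _)) ?_
    (two_dvd_twist_sub _ (by decide))
  rw [Nat.div_eq_of_lt (Nat.pow_lt_pow_right one_lt_two hl)]
  exact Nat.zero_div _

/-- The class of `ε_i + ε_j` is the sum of the `e_l` over the binary digits in which `i` and `j`
differ. -/
theorem halfVec_pair_mem_glueLattice {k : ℕ} {i j : Fin 16} (hblock : i.1 / 2 ^ k = j.1 / 2 ^ k) :
    halfVec (Pi.single i 2 + Pi.single j 2) ∈ glueLattice BW16 glueVec (flag 4 k) := by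
  let bit (i : Fin 16) (l : Fin 4) : ℤ := if (i : ℕ).testBit l then 1 else 0
  refine mem_glueLattice.2 ⟨fun a => if a.2 then 0 else bit i a.1 - bit j a.1, ?_, ?_⟩
  · refine mem_flag.2 fun l => ⟨by simp [reduction_apply], fun hl => ?_⟩
    have hbit : (i : ℕ).testBit l = (j : ℕ).testBit l := by
      obtain ⟨d, hd⟩ := Nat.exists_eq_add_of_le hl
      rw [hd, add_comm, ← Nat.testBit_div_two_pow, hblock, Nat.testBit_div_two_pow]
    simp [reduction_apply, bit, hbit]
  · have hsingle : ∀ j : Fin 16, (Pi.single j 4 : Fin 16 → ℤ) ∈ scaledBW := by decide +kernel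
    convert halfVec_mem_BW16 (add_mem (sub_mem (pair_sub_sum_mem_scaledBW i)
      (pair_sub_sum_mem_scaledBW j)) (hsingle j)) using 1
    have hfour : (Pi.single j 4 : Fin 16 → ℤ) = Pi.single j 2 + Pi.single j 2 := by
      rw [← Pi.single_add]
      rfl
    simp only [Fintype.linearCombination_apply, Fintype.sum_prod_type, Fintype.sum_bool, if_true,
      Bool.false_eq_true, if_false, zero_smul, zero_add, sub_smul, Finset.sum_sub_distrib, glueVec,
      hfour, map_add, map_sub, map_sum, bit, ite_smul, one_smul, apply_ite halfVec, map_zero]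
    abel

theorem blockRoots_subset_glueLattice (k : ℕ) :
    blockRoots k ⊆ glueLattice BW16 glueVec (flag 4 k) := by
  intro v hv
  obtain ⟨i, j, -, hblock, c, hc, rfl⟩ := exists_eq_add_zsmul_of_mem_blockRoots hv
  obtain ⟨p, hp⟩ := two_dvd_twist_sub i (c := 1) (by norm_num)
  obtain ⟨q, hq⟩ := two_dvd_twist_sub j hc
  have htwo := fun i => le_glueLattice (b := glueVec) (flag 4 k) ((BW16_le_iff.1 le_rfl).1 i)
  have hsplit : (εv i + c • εv j : E 16) = halfVec (Pi.single i 2 + Pi.single j 2) +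
      p • (2 : ℝ) • εv i + q • (2 : ℝ) • εv j := by
    rw [halfVec_pair]
    simp only [← Int.cast_smul_eq_zsmul ℝ, eq_add_of_sub_eq hq,
      eq_sub_of_add_eq' (eq_add_of_sub_eq hp).symm]
    push_cast
    module
  rw [SetLike.mem_coe, hsplit]
  exact add_mem (add_mem (halfVec_pair_mem_glueLattice hblock) (Submodule.smul_mem _ _ (htwo i)))
    (Submodule.smul_mem _ _ (htwo j))

theorem span_blockRoots_union_eq_glueLattice {k : ℕ} (hk : 1 ≤ k) (hk4 : k ≤ 4) {T : Set (E 16)}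
    (hT : T ⊆ {f0, g1, g2, g3, g4, g5, g6, g7, g8, g9, g10, g11}) (hf0 : f0 ∈ T)
    (hg : ∀ j, k < gLevel j → gVec j ∈ T) :
    Submodule.span ℤ (blockRoots k ∪ T) = glueLattice BW16 glueVec (flag 4 k) := by
  refine le_antisymm (Submodule.span_le.2 (Set.union_subset (blockRoots_subset_glueLattice k) ?_))
    (isHyperbolicGlue_BW16.glueLattice_flag_le
      (BW16_le_of_blockRoots_subset hk ?_ ?_ fun j hj => ?_) hk4 fun l hl => ?_)
  · exact fun x hx => le_glueLattice _ (Submodule.subset_span (Or.inr (hT hx)))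
  · exact fun x hx => Submodule.subset_span (Or.inl hx)
  · exact Submodule.subset_span (Or.inr hf0)
  · exact Submodule.subset_span (Or.inr (hg j hj))
  · exact Submodule.span_mono Set.subset_union_left (glueVec_false_mem_span_blockRoots hl)

theorem Λ'16_2_1_eq : Λ'16_2_1 = glueLattice BW16 glueVec (flag 4 1) := by
  rw [Λ'16_2_1, setA1_eq_blockRoots]
  refine span_blockRoots_union_eq_glueLattice le_rfl (by simp) ?_ (by simp) ?_
  · intro x
    simp only [Set.mem_insert_iff, Set.mem_singleton_iff]
    tauto
  · rw [gVec_eq_cons]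
    intro j
    fin_cases j <;> simp [gLevel]

theorem Λ'16_2_2_eq : Λ'16_2_2 = glueLattice BW16 glueVec (flag 4 2) := by
  rw [Λ'16_2_2, setD4_eq_blockRoots]
  refine span_blockRoots_union_eq_glueLattice (by simp) (by simp) ?_ (by simp) ?_
  · intro x
    simp only [Set.mem_insert_iff, Set.mem_singleton_iff]
    tauto
  · rw [gVec_eq_cons]
    intro j
    fin_cases j <;> simp [gLevel]

theorem Λ'16_2_3_eq : Λ'16_2_3 = glueLattice BW16 glueVec (flag 4 3) := by
  rw [Λ'16_2_3, setD8_eq_blockRoots]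
  refine span_blockRoots_union_eq_glueLattice (by simp) (by simp) (by simp) (by simp) ?_
  intro j
  fin_cases j <;> simp [gLevel]

theorem glueVec_last_false : glueVec (Fin.last 3, false) = -(εv 0 + εv 8) := by
  have htwist : twist 0 = -1 ∧ twist 8 = -1 := by decide
  rw [neg_add, ← neg_one_zsmul (εv 0), ← neg_one_zsmul (εv 8)]
  nth_rewrite 1 [← htwist.1]
  rw [← htwist.2]
  exact glueVec_false (Fin.last 3)

theorem glueVec_last_true_apply (i : Fin 16) :
    glueVec (Fin.last 3, true) i = twist i * h1 i := by
  fin_cases i <;> simp [glueVec, glueCoord, halfVec_apply, twist, face, h1, vec, Nat.testBit]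
  norm_num

theorem f1_eq_sub : f1 = glueVec (Fin.last 3, true) - glueVec (Fin.last 3, false) := by
  ext i
  rw [PiLp.sub_apply, glueVec_last_true_apply, glueVec_last_false]
  fin_cases i <;> simp [f1, h1, vec, twist, εv, Fin.ext_iff]
  norm_num

theorem glueLattice_sup_span_f1 (C : Submodule (ZMod 2) (HypSpace 4)) :
    glueLattice BW16 glueVec C ⊔ Submodule.span ℤ {f1} = glueLattice BW16 glueVec
      (C ⊔ Submodule.span (ZMod 2)
        {basisVec (Fin.last 3, false) + basisVec (Fin.last 3, true)}) := by
  have hclass : basisVec (Fin.last 3, false) + basisVec (Fin.last 3, true) = reduction 4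
      (Pi.single (Fin.last 3, true) 1 - Pi.single (Fin.last 3, false) 1) := by
    rw [map_sub, reduction_single, reduction_single, ZModModule.sub_eq_add,
      add_comm (basisVec _)]
  rw [hclass, glueLattice_sup_span, map_sub, Fintype.linearCombination_apply_single,
    Fintype.linearCombination_apply_single, one_smul, one_smul, f1_eq_sub]

theorem Λ16_2_1_eq_sup : Λ16_2_1 = Λ'16_2_1 ⊔ Submodule.span ℤ {f1} := by
  rw [Λ'16_2_1, ← Submodule.span_union, Λ16_2_1, Set.insert_comm f0, Set.union_assoc,
    Set.union_singleton]

theorem Λ16_2_2_eq_sup : Λ16_2_2 = Λ'16_2_2 ⊔ Submodule.span ℤ {f1} := by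
  rw [Λ'16_2_2, ← Submodule.span_union, Λ16_2_2, Set.insert_comm f0, Set.union_assoc,
    Set.union_singleton]

theorem Λ16_2_3_eq_sup : Λ16_2_3 = Λ'16_2_3 ⊔ Submodule.span ℤ {f1} := by
  rw [Λ'16_2_3, ← Submodule.span_union, Λ16_2_3, Set.pair_comm, Set.union_assoc,
    Set.union_singleton]

theorem D16plus_eq : D16plus = glueLattice BW16 glueVec (flag 4 4) := by
  have hflag : flag 4 4 = _ := flag_succ (Fin.last 3)
  rw [hflag, ← reduction_single, glueLattice_sup_span, Fintype.linearCombination_apply_single,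
    one_smul, glueVec_last_false, ← Set.neg_singleton, Submodule.span_neg, Fin.val_last,
    ← Λ'16_2_3_eq, Λ'16_2_3, ← Submodule.span_union, D16plus, Set.pair_comm _ f0, Set.union_assoc,
    Set.singleton_union]

theorem glueLattice_flag_mem {k : ℕ} (hk : k ≤ 4) : glueLattice BW16 glueVec (flag 4 k) ∈
    ({BW16, Λ'16_2_1, Λ'16_2_2, Λ'16_2_3, D16plus} : Set (Submodule ℤ (E 16))) := by
  have hbot : BW16 = glueLattice BW16 glueVec (flag 4 0) := by
    rw [flag_zero, isHyperbolicGlue_BW16.glueLattice_bot]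
  rw [Λ'16_2_1_eq, Λ'16_2_2_eq, Λ'16_2_3_eq, D16plus_eq]
  interval_cases k
  exacts [Or.inl hbot.symm, by simp, by simp, by simp, by simp]

theorem glueLattice_flag_sup_mem {k : ℕ} (hk : k ≤ 3) :
    glueLattice BW16 glueVec (flag 4 k ⊔ Submodule.span (ZMod 2)
      {basisVec (Fin.last 3, false) + basisVec (Fin.last 3, true)}) ∈
    ({O16, Λ16_2_1, Λ16_2_2, Λ16_2_3} : Set (Submodule ℤ (E 16))) := by
  rw [← glueLattice_sup_span_f1, O16, Λ16_2_1_eq_sup, Λ16_2_2_eq_sup, Λ16_2_3_eq_sup]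
  interval_cases k
  · rw [flag_zero, isHyperbolicGlue_BW16.glueLattice_bot]
    simp
  · simp [Λ'16_2_1_eq]
  · simp [Λ'16_2_2_eq]
  · simp [Λ'16_2_3_eq]

theorem IsometricLattices.span_of_involutive {n : ℕ} {S T : Set (E n)} {g : E n ≃ₗᵢ[ℝ] E n}
    (hg : Function.Involutive g) (hST : ∀ x ∈ S, g x ∈ Submodule.span ℤ T)
    (hTS : ∀ x ∈ T, g x ∈ Submodule.span ℤ S) :
    IsometricLattices (Submodule.span ℤ S) (Submodule.span ℤ T) := by
  let f : E n →ₗ[ℤ] E n := g.toLinearEquiv.toLinearMap.restrictScalars ℤ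
  have hS : Submodule.span ℤ S ≤ (Submodule.span ℤ T).comap f := Submodule.span_le.2 hST
  have hT : Submodule.span ℤ T ≤ (Submodule.span ℤ S).comap f := Submodule.span_le.2 hTS
  refine ⟨g, Set.Subset.antisymm (Set.image_subset_iff.2 hS) fun y hy => ⟨g y, hT hy, hg y⟩⟩

/-- The isometry changing the signs of the coordinates where `twist` is `-1`. -/
def twistIsometry : E 16 ≃ₗᵢ[ℝ] E 16 :=
  LinearIsometryEquiv.piLpCongrRight 2 fun i =>
    if twist i = 1 then LinearIsometryEquiv.refl ℝ ℝ else LinearIsometryEquiv.neg ℝ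

theorem twistIsometry_apply (x : E 16) (i : Fin 16) : twistIsometry x i = twist i * x i := by
  by_cases h : (i : ℕ) % 8 = 0 <;> simp [twistIsometry, twist, h]

theorem involutive_twistIsometry : Function.Involutive twistIsometry := fun x => by
  ext i
  have htwist : (twist i : ℝ) * twist i = 1 := mod_cast twist_mul_self i
  rw [twistIsometry_apply, twistIsometry_apply, ← mul_assoc, htwist, one_mul]

theorem twistIsometry_εv (i : Fin 16) : twistIsometry (εv i) = twist i • εv i := by
  ext j
  obtain rfl | hij := eq_or_ne j i <;> simp [twistIsometry_apply, εv, *]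

theorem twistIsometry_mem_span_blockRoots {k : ℕ} {v : E 16} (hv : v ∈ blockRoots k) :
    twistIsometry v ∈ Submodule.span ℤ (blockRoots k) := by
  obtain ⟨i, j, hij, hblock, c, hc, rfl⟩ := exists_eq_add_zsmul_of_mem_blockRoots hv
  rw [map_add, map_zsmul, twistIsometry_εv, twistIsometry_εv, smul_smul]
  refine smul_add_smul_mem_span_blockRoots hij hblock ?_
  unfold twist
  split_ifs <;> omega

theorem twistIsometry_h1 : twistIsometry h1 = glueVec (Fin.last 3, true) := by
  ext i
  rw [twistIsometry_apply, glueVec_last_true_apply]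

theorem twistIsometry_h1_add_h2 : twistIsometry (h1 + h2) = f0 := by
  ext i
  rw [twistIsometry_apply]
  fin_cases i <;> simp [h1, h2, vec, f0, twist] <;> norm_num

theorem glueLattice_isometricLattices_E8E8 :
    IsometricLattices (glueLattice BW16 glueVec
      (flag 4 3 ⊔ Submodule.span (ZMod 2) {basisVec (Fin.last 3, true)})) E8E8 := by
  have hroots {k : ℕ} {T : Set (E 16)} {v : E 16} (hv : v ∈ blockRoots k) :
      twistIsometry v ∈ Submodule.span ℤ (blockRoots k ∪ T) :=
    Submodule.span_mono Set.subset_union_left (twistIsometry_mem_span_blockRoots hv)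
  have hglue := involutive_twistIsometry.eq_iff.1 twistIsometry_h1
  have hf0 := involutive_twistIsometry.eq_iff.1 twistIsometry_h1_add_h2
  rw [← reduction_single, glueLattice_sup_span, Fintype.linearCombination_apply_single, one_smul,
    ← Λ'16_2_3_eq, Λ'16_2_3, ← Submodule.span_union, Set.union_assoc, E8E8, setD8_eq_blockRoots]
  have mem {S : Set (E 16)} {v : E 16} (hv : v ∈ S) :
      v ∈ Submodule.span ℤ (blockRoots 3 ∪ S) := Submodule.subset_span (Or.inr hv)
  refine IsometricLattices.span_of_involutive involutive_twistIsometry ?_ ?_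
  · rintro x (hx | rfl | rfl)
    · exact hroots hx
    · rw [← hf0]
      exact add_mem (mem (by simp)) (mem (by simp))
    · rw [← hglue]
      exact mem (by simp)
  · rintro x (hx | rfl | rfl)
    · exact hroots hx
    · rw [twistIsometry_h1]
      exact mem (by simp)
    · rw [← add_sub_cancel_left h1 h2, map_sub, twistIsometry_h1, twistIsometry_h1_add_h2]
      exact sub_mem (mem (by simp)) (mem (by simp))

end Lattices16

/-- Every integral lattice in `ℝ¹⁶` containing `BW₁₆` is isometric to one of the ten
lattices `BW₁₆`, `O₁₆`, `Λ_{16,2,1}`, `Λ_{16,2,2}`, `Λ_{16,2,3}`, `Λ'_{16,2,1}`,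
`Λ'_{16,2,2}`, `Λ'_{16,2,3}`, `D₁₆⁺`, `E₈ ⊥ E₈`. -/
theorem integral_lattices_containing_BW16 (L : Submodule ℤ (E 16))
    (hL : LatticeIsIntegral L) (hBW : BW16 ≤ L) :
    IsometricLattices L BW16 ∨ IsometricLattices L O16 ∨
    IsometricLattices L Λ16_2_1 ∨ IsometricLattices L Λ16_2_2 ∨ IsometricLattices L Λ16_2_3 ∨
    IsometricLattices L Λ'16_2_1 ∨ IsometricLattices L Λ'16_2_2 ∨ IsometricLattices L Λ'16_2_3 ∨
    IsometricLattices L D16plus ∨ IsometricLattices L E8E8 := by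
  obtain ⟨C, hC, hLC⟩ := isHyperbolicGlue_BW16.exists_isNormalForm_isometricLattices
    exists_isHalfTurnFrame_BW16 hL hBW
  obtain ⟨k, hk, rfl⟩ | ⟨k, hk, rfl⟩ | rfl := hC
  · have hmem := glueLattice_flag_mem hk
    simp only [Set.mem_insert_iff, Set.mem_singleton_iff] at hmem
    obtain h | h | h | h | h := hmem <;> rw [h] at hLC <;> tauto
  · have hmem := glueLattice_flag_sup_mem hk
    simp only [Set.mem_insert_iff, Set.mem_singleton_iff] at hmem
    obtain h | h | h | h := hmem <;> rw [h] at hLC <;> tauto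
  · have hE8E8 := hLC.trans glueLattice_isometricLattices_E8E8
    tauto
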